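/- arXiv:1906.00326 — 6 statements merged into one kernel-verified Lean document; each statement's English description precedes it below -/
import Mathlib

section
/- Let n ≥ 1 and let d be an integer with 0 < d ≤ n. Then for every multilinear real polynomial p in n variables of degree strictly less than d, there exists x ∈ {-1,1}^n with |p(x) − AND(x)| ≥ 2^{−n}·Σ_{j=0}^{⌊(n−d)/2⌋} C(n,j), i.e., the error is at least the probability that a Binomial(n,1/2) random variable is at most (n−d)/2. -/
open Finset

/-- Map a Boolean vector to the corresponding point of the cube `{-1,1}^n`
(`true ↦ 1`, `false ↦ -1`). -/
def toPM {n : ℕ} (b : Fin n → Bool) : Fin n → ℝ := fun i => if b i then 1 else -1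

/-- Evaluation of the multilinear polynomial with coefficients `c` at `x`. -/
def evalPoly {n : ℕ} (c : Finset (Fin n) → ℝ) (x : Fin n → ℝ) : ℝ :=
  ∑ S : Finset (Fin n), c S * ∏ i ∈ S, x i

/-- `AND : {-1,1}^n → {0,1}` (in Boolean-vector coordinates): 1 iff all inputs are `1`. -/
def andF {n : ℕ} (b : Fin n → Bool) : ℝ := if b = fun _ => true then 1 else 0

/-- characters -/
def chi {n : ℕ} (S : Finset (Fin n)) (b : Fin n → Bool) : ℝ := ∏ i ∈ S, toPM b i

lemma sum_prod_bool {n : ℕ} (h : Fin n → Bool → ℝ) :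
    ∑ b : Fin n → Bool, ∏ i, h i (b i) = ∏ i, (h i true + h i false) := by
  have := Finset.prod_univ_sum (fun _ : Fin n => (Finset.univ : Finset Bool)) h
  simp only [Fintype.piFinset_univ, Fintype.sum_bool] at this
  exact this.symm

lemma chi_eq {n : ℕ} (S : Finset (Fin n)) (b : Fin n → Bool) :
    chi S b = ∏ i, (if i ∈ S then (if b i then (1:ℝ) else -1) else 1) := by
  unfold chi toPM
  rw [Finset.prod_ite_mem, Finset.univ_inter]

lemma chi_orth {n : ℕ} (A B : Finset (Fin n)) :
    ∑ b : Fin n → Bool, chi A b * chi B b = if A = B then 2 ^ n else 0 := by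
  simp only [chi_eq, ← Finset.prod_mul_distrib]
  rw [sum_prod_bool (fun i v => (if i ∈ A then (if v then (1:ℝ) else -1) else 1) *
    (if i ∈ B then (if v then (1:ℝ) else -1) else 1))]
  by_cases h : A = B
  · rw [if_pos h]; subst h
    rw [Finset.prod_congr rfl (g := fun _ => (2:ℝ))]
    · simp
    · intro i _
      by_cases hi : i ∈ A <;> simp [hi] <;> norm_num
  · rw [if_neg h]
    have : ∃ i, ¬ (i ∈ A ↔ i ∈ B) := by
      by_contra hc
      push Not at hc
      exact h (Finset.ext hc)
    obtain ⟨i, hi⟩ := this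
    apply Finset.prod_eq_zero (Finset.mem_univ i)
    by_cases h1 : i ∈ A <;> by_cases h2 : i ∈ B <;> simp_all

lemma chi_orth4 {n : ℕ} (A B S : Finset (Fin n)) (hc : A.card + B.card + S.card < n) :
    ∑ b : Fin n → Bool, chi univ b * (chi A b * chi B b) * chi S b = 0 := by
  simp only [chi_eq, ← Finset.prod_mul_distrib]
  rw [sum_prod_bool (fun i v => (if i ∈ (univ : Finset (Fin n)) then (if v then (1:ℝ) else -1) else 1) *
    ((if i ∈ A then (if v then (1:ℝ) else -1) else 1) *
    (if i ∈ B then (if v then (1:ℝ) else -1) else 1)) *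
    (if i ∈ S then (if v then (1:ℝ) else -1) else 1))]
  have : ∃ i, i ∉ A ∪ B ∪ S := by
    by_contra hcon
    push Not at hcon
    have h1 : A ∪ B ∪ S = univ := Finset.eq_univ_of_forall hcon
    have h2 := Finset.card_union_le (A ∪ B) S
    have h3 := Finset.card_union_le A B
    rw [h1, Finset.card_univ, Fintype.card_fin] at h2
    omega
  obtain ⟨i, hi⟩ := this
  apply Finset.prod_eq_zero (Finset.mem_univ i)
  simp only [Finset.mem_union, not_or] at hi
  simp [hi]

lemma chi_abs {n : ℕ} (S : Finset (Fin n)) (b : Fin n → Bool) : |chi S b| = 1 := by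
  unfold chi toPM
  rw [Finset.abs_prod]
  apply Finset.prod_eq_one
  intro i _
  split_ifs <;> simp

lemma chi_true {n : ℕ} (S : Finset (Fin n)) : chi S (fun _ => true) = 1 := by
  simp [chi, toPM]

lemma card_low (n k : ℕ) :
    (((univ : Finset (Finset (Fin n))).filter (fun S => S.card < k)).card : ℝ)
      = ∑ j ∈ Finset.range k, (n.choose j : ℝ) := by
  rw [Finset.card_eq_sum_card_fiberwise (f := Finset.card) (t := Finset.range k)]
  · push_cast
    apply Finset.sum_congr rfl
    intro j hj
    rw [Finset.mem_range] at hj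
    have : (((univ : Finset (Finset (Fin n))).filter (fun S => S.card < k)).filter
        (fun S => S.card = j)) = Finset.powersetCard j univ := by
      ext S
      simp [Finset.mem_powersetCard]
      omega
    rw [this]
    simp
  · intro S hS
    simpa using hS

theorem stmt2 (n d : ℕ) (hn : 1 ≤ n) (hd : 0 < d) (hdn : d ≤ n)
    (p : Finset (Fin n) → ℝ) (hdeg : ∀ S : Finset (Fin n), p S ≠ 0 → S.card < d) :
    ∃ b : Fin n → Bool,
      (∑ j ∈ Finset.range ((n - d) / 2 + 1), (n.choose j : ℝ)) / 2 ^ n ≤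
        |evalPoly p (toPM b) - andF b| := by
  by_contra hcon
  push Not at hcon
  rw [← card_low] at hcon
  set F := (univ : Finset (Finset (Fin n))).filter (fun S => S.card < (n - d) / 2 + 1) with hF
  have hFpos : 0 < (F.card : ℝ) := by
    have : F.Nonempty := ⟨∅, by simp [hF]⟩
    exact_mod_cast this.card_pos
  set D : ℝ := (F.card : ℝ) with hD
  let g : (Fin n → Bool) → ℝ := fun b => ∑ S ∈ F, chi S b
  have hgg : ∀ b, g b ^ 2 = ∑ A ∈ F, ∑ B ∈ F, chi A b * chi B b := by
    intro b
    rw [pow_two, Finset.sum_mul_sum]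
  have hg1 : g (fun _ => true) = D := by simp [g, chi_true, hD]
  have hgsum : ∑ b, g b ^ 2 = 2 ^ n * D := by
    simp only [hgg]
    rw [Finset.sum_comm]
    simp_rw [Finset.sum_comm (s := (univ : Finset (Fin n → Bool)))]
    simp only [chi_orth]
    rw [Finset.sum_congr rfl (g := fun _ => (2:ℝ)^n)]
    · simp [hD, mul_comm]
    · intro A hA
      simp [hA]
  have horth : ∑ b, chi univ b * g b ^ 2 * evalPoly p (toPM b) = 0 := by
    have h1 : ∀ b, chi univ b * g b ^ 2 * evalPoly p (toPM b) =
        ∑ S : Finset (Fin n), ∑ A ∈ F, ∑ B ∈ F,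
          p S * (chi univ b * (chi A b * chi B b) * chi S b) := by
      intro b
      unfold evalPoly
      rw [hgg, Finset.mul_sum]
      refine Finset.sum_congr rfl fun S _ => ?_
      change _ * (p S * chi S b) = _
      simp only [Finset.mul_sum, Finset.sum_mul]
      refine Finset.sum_congr rfl fun A _ => Finset.sum_congr rfl fun B _ => ?_
      ring
    simp only [h1]
    rw [Finset.sum_comm]
    refine Finset.sum_eq_zero fun S _ => ?_
    rw [Finset.sum_comm]
    refine Finset.sum_eq_zero fun A hA => ?_
    rw [Finset.sum_comm]
    refine Finset.sum_eq_zero fun B hB => ?_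
    rw [← Finset.mul_sum]
    by_cases hS : p S = 0
    · simp [hS]
    · have := hdeg S hS
      simp only [hF, Finset.mem_filter] at hA hB
      rw [chi_orth4 A B S (by omega), mul_zero]
  have hand : ∑ b, chi univ b * g b ^ 2 * andF b = D ^ 2 := by
    simp [andF, chi_true, hg1]
  have hle : D ^ 2 ≤ ∑ b, g b ^ 2 * |evalPoly p (toPM b) - andF b| := by
    have : D ^ 2 = ∑ b, chi univ b * g b ^ 2 * (andF b - evalPoly p (toPM b)) := by
      simp only [mul_sub, Finset.sum_sub_distrib, horth, hand, sub_zero]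
    rw [this]
    refine Finset.sum_le_sum fun b _ => ?_
    refine (le_abs_self _).trans ?_
    rw [abs_mul, abs_mul, chi_abs, one_mul, abs_of_nonneg (sq_nonneg (g b)), abs_sub_comm]
  have hlt : ∑ b, g b ^ 2 * |evalPoly p (toPM b) - andF b| < ∑ b, g b ^ 2 * (D / 2 ^ n) := by
    refine Finset.sum_lt_sum (fun b _ => ?_) ⟨fun _ => true, Finset.mem_univ _, ?_⟩
    · exact mul_le_mul_of_nonneg_left (hcon b).le (sq_nonneg _)
    · refine mul_lt_mul_of_pos_left (hcon _) ?_
      rw [hg1]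
      positivity
  rw [← Finset.sum_mul, hgsum] at hlt
  have : (2:ℝ) ^ n * D * (D / 2 ^ n) = D ^ 2 := by field_simp
  linarith
end

section
/- Let n ≥ 1 and let w ∈ ℝ^n be a nonzero vector with nonnegative entries. Then every multilinear real polynomial p of w-weighted degree strictly less than ‖w‖₂/2 satisfies max_{x ∈ {-1,1}^n} |p(x) − AND(x)| ≥ 3/32. In other words, the w-weighted 3/32-approximate degree of AND is at least ‖w‖₂/2. -/
open Finset

theorem hx_sum (L lam : ℝ) (hL : 0 < L) (h : |lam| ≤ L) :
    HasSum (fun n : ℕ => 1 / (n:ℝ)^2 * ((-1)^n * Real.cos (n * (Real.pi / L) * lam)))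
      (Real.pi^2 * (lam^2 / (4 * L^2) - 1/12)) := by
  obtain ⟨h1, h2⟩ := abs_le.mp h
  have hx : (1/2 + lam/(2*L)) ∈ Set.Icc (0:ℝ) 1 := by
    have e1 : -(1/2) ≤ lam/(2*L) := by rw [le_div_iff₀ (by positivity)]; linarith
    have e2 : lam/(2*L) ≤ 1/2 := by rw [div_le_iff₀ (by positivity)]; linarith
    constructor <;> linarith
  have := hasSum_one_div_nat_pow_mul_cos (k := 1) one_ne_zero hx
  convert this using 1
  · funext n
    have : 2 * Real.pi * n * (1/2 + lam/(2*L)) = n * (Real.pi / L) * lam + n * Real.pi := by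
      field_simp; ring
    rw [this, Real.cos_add_nat_mul_pi]
  · have hb : (Polynomial.map (algebraMap ℚ ℝ) (Polynomial.bernoulli 2)).eval (1/2 + lam/(2*L))
        = (1/2 + lam/(2*L))^2 - (1/2 + lam/(2*L)) + 1/6 := by
      have h2 : bernoulli 2 = 1/6 := by rw [bernoulli_eq_bernoulli'_of_ne_one (by norm_num), bernoulli'_two]
      simp [Polynomial.bernoulli, Finset.sum_range_succ, h2, bernoulli_one]
      ring
    rw [show 2 * 1 = 2 by norm_num, hb]
    simp [Nat.factorial]
    field_simp
    ring

theorem bern2 {ι : Type} (s : Finset ι) (a lam : ι → ℝ) (L M : ℝ) (hL : 0 < L)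
    (h : ∀ i ∈ s, |lam i| ≤ L) (hM : ∀ t, |∑ i ∈ s, a i * Real.cos (lam i * t)| ≤ M) (t : ℝ) :
    |∑ i ∈ s, a i * lam i ^ 2 * Real.cos (lam i * t)| ≤ M * L^2 := by
  have key := hasSum_sum (fun i hi => (hx_sum L (lam i) hL (h i hi)).mul_left (a i * Real.cos (lam i * t)))
  have hz := hasSum_zeta_two.mul_left M
  have hb : |∑ i ∈ s, a i * Real.cos (lam i * t) * (Real.pi^2 * (lam i^2 / (4 * L^2) - 1/12))|
      ≤ M * (Real.pi^2/6) := by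
    rw [← Real.norm_eq_abs, ← key.tsum_eq]
    refine tsum_of_norm_bounded hz (fun n => ?_)
    have e : ∑ i ∈ s, a i * Real.cos (lam i * t) * (1 / (n:ℝ)^2 * ((-1)^n * Real.cos (n * (Real.pi / L) * lam i)))
       = (1 / (n:ℝ)^2) * ((-1)^n * ((∑ i ∈ s, a i * Real.cos (lam i * (t + n * (Real.pi/L)))
          + ∑ i ∈ s, a i * Real.cos (lam i * (t - n * (Real.pi/L)))) / 2)) := by
      rw [← Finset.sum_add_distrib, Finset.sum_div, Finset.mul_sum, Finset.mul_sum]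
      refine Finset.sum_congr rfl fun i _ => ?_
      rw [mul_add, mul_sub, Real.cos_add, Real.cos_sub, mul_comm (n * (Real.pi/L)) (lam i)]
      ring
    rw [e, Real.norm_eq_abs, abs_mul, abs_mul, abs_pow, abs_neg, abs_one, one_pow, one_mul,
      abs_of_nonneg (by positivity), mul_comm M]
    refine mul_le_mul_of_nonneg_left ?_ (by positivity)
    have h1 := abs_le.mp (hM (t + n * (Real.pi/L)))
    have h2 := abs_le.mp (hM (t - n * (Real.pi/L)))
    rw [abs_le]; constructor <;> linarith
  have e : ∑ i ∈ s, a i * Real.cos (lam i * t) * (Real.pi^2 * (lam i^2 / (4 * L^2) - 1/12))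
     = Real.pi^2 * ((∑ i ∈ s, a i * lam i ^ 2 * Real.cos (lam i * t)) / (4 * L^2)
        - (∑ i ∈ s, a i * Real.cos (lam i * t))/12) := by
    rw [Finset.sum_div, Finset.sum_div, ← Finset.sum_sub_distrib, Finset.mul_sum]
    refine Finset.sum_congr rfl fun i _ => ?_
    ring
  have hq := abs_le.mp (hM t)
  rw [e, abs_mul, abs_of_nonneg (by positivity), show M * (Real.pi^2/6) = Real.pi^2 * (M/6) by ring] at hb
  have hb' := abs_le.mp (le_of_mul_le_mul_left hb (by positivity))
  have e2 : (∑ i ∈ s, a i * lam i ^ 2 * Real.cos (lam i * t))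
    = ((∑ i ∈ s, a i * lam i ^ 2 * Real.cos (lam i * t)) / (4 * L^2)) * (4 * L^2) :=
    (div_mul_cancel₀ _ (by positivity)).symm
  have : 0 < 4 * L^2 := by positivity
  rw [e2, show M * L^2 = M/4 * (4 * L^2) by ring, abs_mul, abs_of_pos this]
  refine mul_le_mul_of_nonneg_right ?_ this.le
  rw [abs_le]; constructor <;> linarith [hb'.1, hb'.2, hq.1, hq.2]

theorem taylor2 {ι : Type} (s : Finset ι) (a lam : ι → ℝ) (L M : ℝ) (hL : 0 < L)
    (h : ∀ i ∈ s, |lam i| ≤ L) (hM : ∀ t, |∑ i ∈ s, a i * Real.cos (lam i * t)| ≤ M)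
    (t : ℝ) (ht : 0 ≤ t) :
    ∑ i ∈ s, a i - ∑ i ∈ s, a i * Real.cos (lam i * t) ≤ M * L^2 * t^2 / 2 := by
  have hc : ∀ c x : ℝ, HasDerivAt (fun x => c * x) c x := fun c x => by
    simpa using (hasDerivAt_id x).const_mul c
  have d1 : ∀ x, HasDerivAt (fun x => M * L^2 * x^2/2 + ∑ i ∈ s, a i * Real.cos (lam i * x))
      (M * L^2 * x - ∑ i ∈ s, a i * lam i * Real.sin (lam i * x)) x := by
    intro x
    have := HasDerivAt.fun_sum (u := s) (fun i _ => ((hc (lam i) x).cos.const_mul (a i)))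
    convert! (((hasDerivAt_pow 2 x).const_mul (M * L^2)).div_const 2).add this using 1
    rw [sub_eq_add_neg, ← Finset.sum_neg_distrib]
    congr 1
    · norm_num; ring
    · refine Finset.sum_congr rfl fun i _ => ?_
      ring
  have d2 : ∀ x, HasDerivAt (fun x => M * L^2 * x - ∑ i ∈ s, a i * lam i * Real.sin (lam i * x))
      (M * L^2 - ∑ i ∈ s, a i * lam i^2 * Real.cos (lam i * x)) x := by
    intro x
    have := HasDerivAt.fun_sum (u := s) (fun i _ => ((hc (lam i) x).sin.const_mul (a i * lam i)))
    convert! (hc (M * L^2) x).sub this using 1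
    congr 1
    refine Finset.sum_congr rfl fun i _ => ?_
    ring
  have m2 : Monotone (fun x => M * L^2 * x - ∑ i ∈ s, a i * lam i * Real.sin (lam i * x)) := by
    refine monotone_of_deriv_nonneg (fun x => (d2 x).differentiableAt) (fun x => ?_)
    rw [(d2 x).deriv]
    linarith [(abs_le.mp (bern2 s a lam L M hL h hM x)).2]
  have m1 : MonotoneOn (fun x => M * L^2 * x^2/2 + ∑ i ∈ s, a i * Real.cos (lam i * x)) (Set.Ici 0) := by
    refine monotoneOn_of_deriv_nonneg (convex_Ici 0)
      (fun x _ => (d1 x).continuousAt.continuousWithinAt)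
      (fun x _ => (d1 x).differentiableAt.differentiableWithinAt) (fun x hx => ?_)
    rw [(d1 x).deriv]
    rw [interior_Ici] at hx
    have := m2 (le_of_lt (Set.mem_Ioi.mp hx))
    simpa using this
  have := m1 (Set.mem_Ici.mpr le_rfl) (Set.mem_Ici.mpr ht) ht
  simp at this
  linarith

def CS (L : ℝ) : Submodule ℝ (ℝ → ℝ) :=
  Submodule.span ℝ {f | ∃ lam : ℝ, |lam| ≤ L ∧ f = fun t => Real.cos (lam * t)}

theorem CS_mul (L w : ℝ) (hw : 0 ≤ w) (f : ℝ → ℝ) (hf : f ∈ CS L) :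
    (fun t => Real.cos (w * t) * f t) ∈ CS (w + L) := by
  unfold CS at hf
  induction hf using Submodule.span_induction with
  | mem f hf =>
    obtain ⟨lam, hl, rfl⟩ := hf
    have e : (fun t => Real.cos (w * t) * Real.cos (lam * t)) =
        (1/2:ℝ) • (fun t => Real.cos ((w + lam) * t)) + (1/2:ℝ) • (fun t => Real.cos ((w - lam) * t)) := by
      funext t
      simp only [Pi.add_apply, Pi.smul_apply, smul_eq_mul, add_mul, sub_mul, Real.cos_add, Real.cos_sub]
      ring
    rw [e]
    have := abs_le.mp hl
    refine Submodule.add_mem _ (Submodule.smul_mem _ _ (Submodule.subset_span ⟨_, ?_, rfl⟩))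
      (Submodule.smul_mem _ _ (Submodule.subset_span ⟨_, ?_, rfl⟩)) <;>
    · rw [abs_le]; constructor <;> linarith
  | zero => 
    convert (CS (w+L)).zero_mem using 1
    funext t; simp
  | add f g _ _ hf hg => 
    convert (CS (w+L)).add_mem hf hg using 1
    funext t; simp [mul_add]
  | smul a f _ hf =>
    convert (CS (w+L)).smul_mem a hf using 1
    funext t; simp; ring

theorem CS_prod {n : ℕ} (w : Fin n → ℝ) (hw : ∀ i, 0 ≤ w i) (S : Finset (Fin n)) :
    (fun t => ∏ i ∈ S, Real.cos (w i * t)) ∈ CS (∑ i ∈ S, w i) := by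
  induction S using Finset.induction_on with
  | empty => exact Submodule.subset_span ⟨0, by simp, by simp⟩
  | insert i S hi ih =>
    simp only [Finset.prod_insert hi, Finset.sum_insert hi]
    exact CS_mul _ _ (hw i) _ ih

theorem CS_mono {L L' : ℝ} (h : L ≤ L') : CS L ≤ CS L' :=
  Submodule.span_mono fun _ ⟨lam, hl, e⟩ => ⟨lam, hl.trans h, e⟩

theorem CS_taylor (f : ℝ → ℝ) (L M : ℝ) (hL : 0 < L) (hf : f ∈ CS L) (hM : ∀ t, |f t| ≤ M)
    (t : ℝ) (ht : 0 ≤ t) : f 0 - f t ≤ M * L^2 * t^2/2 := by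
  obtain ⟨m, a, g, rfl⟩ := Submodule.mem_span_set'.mp hf
  choose lam hl hg using fun i => (g i).2
  simp only [hg, Finset.sum_apply, Pi.smul_apply, smul_eq_mul] at hM ⊢
  simpa using taylor2 Finset.univ a lam L M hL (fun i _ => hl i) hM t ht

/-- product measure weights -/
noncomputable def wt {n : ℕ} (c : Fin n → ℝ) (b : Fin n → Bool) : ℝ := ∏ i, (1 + toPM b i * c i) / 2

theorem wt_nonneg {n : ℕ} (c : Fin n → ℝ) (hc : ∀ i, |c i| ≤ 1) (b : Fin n → Bool) : 0 ≤ wt c b := by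
  refine Finset.prod_nonneg fun i _ => ?_
  have := abs_le.mp (hc i)
  unfold toPM
  split_ifs <;> linarith

theorem wt_char {n : ℕ} (c : Fin n → ℝ) (S : Finset (Fin n)) :
    ∑ b, wt c b * ∏ i ∈ S, toPM b i = ∏ i ∈ S, c i := by
  have e : ∀ b : Fin n → Bool, wt c b * ∏ i ∈ S, toPM b i =
      ∏ i, (fun (i : Fin n) (y : Bool) => (1 + (if y then (1:ℝ) else -1) * c i) / 2 *
        (if i ∈ S then (if y then (1:ℝ) else -1) else 1)) i (b i) := by
    intro b
    rw [Finset.prod_mul_distrib, Finset.prod_ite_mem, Finset.univ_inter]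
    rfl
  rw [Finset.sum_congr rfl fun b _ => e b]
  refine (Fintype.prod_sum (fun (i : Fin n) (y : Bool) => (1 + (if y then (1:ℝ) else -1) * c i) / 2 *
        (if i ∈ S then (if y then (1:ℝ) else -1) else 1))).symm.trans ?_
  rw [← Finset.univ_inter S, ← Finset.prod_ite_mem]
  refine Finset.prod_congr rfl fun i _ => ?_
  by_cases h : i ∈ S <;> simp [h] <;> ring

theorem wt_sum {n : ℕ} (c : Fin n → ℝ) : ∑ b, wt c b = 1 := by
  simpa using wt_char c ∅

theorem wt_eval {n : ℕ} (c : Fin n → ℝ) (p : Finset (Fin n) → ℝ) :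
    ∑ b, wt c b * evalPoly p (toPM b) = evalPoly p c := by
  unfold evalPoly
  simp only [Finset.mul_sum]
  rw [Finset.sum_comm]
  refine Finset.sum_congr rfl fun S _ => ?_
  rw [← wt_char c S, Finset.mul_sum]
  refine Finset.sum_congr rfl fun b _ => ?_
  ring

theorem wt_and {n : ℕ} (c : Fin n → ℝ) : ∑ b, wt c b * andF b = ∏ i, (1 + c i)/2 := by
  simp [andF, wt, toPM]

theorem prod_bound {ι : Type} (s : Finset ι) (f : ι → ℝ) (hf : ∀ i, 0 ≤ f i) :
    1 + ∑ i ∈ s, f i ≤ ∏ i ∈ s, (1 + f i) := by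
  classical
  induction s using Finset.induction_on with
  | empty => simp
  | insert i s hi ih =>
    rw [Finset.prod_insert hi, Finset.sum_insert hi]
    have := Finset.sum_nonneg (s := s) (fun i _ => hf i)
    nlinarith [hf i, mul_le_mul_of_nonneg_left ih (by linarith [hf i] : 0 ≤ 1 + f i), mul_nonneg (hf i) this]

theorem stmt3 (n : ℕ) (hn : 1 ≤ n) (w : Fin n → ℝ) (hw : ∀ i, 0 ≤ w i) (hw0 : w ≠ 0)
    (p : Finset (Fin n) → ℝ)
    (hdeg : ∀ S : Finset (Fin n), p S ≠ 0 →
      ∑ i ∈ S, w i < Real.sqrt (∑ i, (w i) ^ 2) / 2) :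
    ∃ b : Fin n → Bool, 3 / 32 ≤ |evalPoly p (toPM b) - andF b| := by
  by_contra! hcon
  have hpos : 0 < ∑ i, (w i)^2 := by
    obtain ⟨i, hi⟩ := Function.ne_iff.mp hw0
    exact Finset.sum_pos' (fun i _ => sq_nonneg _) ⟨i, Finset.mem_univ _, by
      simp at hi; positivity⟩
  set W := Real.sqrt (∑ i, (w i) ^ 2) with hW
  have hWp : 0 < W := Real.sqrt_pos.mpr hpos
  have hW2 : W^2 = ∑ i, (w i)^2 := Real.sq_sqrt hpos.le
  have hwW : ∀ i, w i ≤ W := fun i =>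
    Real.le_sqrt_of_sq_le (Finset.single_le_sum (f := fun i => (w i)^2) (fun i _ => sq_nonneg _) (Finset.mem_univ i))
  let q : ℝ → ℝ := fun t => evalPoly p (fun i => Real.cos (w i * t))
  have hq : (fun t => q t - 1/2) ∈ CS (W/2) := by
    have e : (fun t => q t - 1/2) = (∑ S, p S • (fun t => ∏ i ∈ S, Real.cos (w i * t)))
        + (-(1/2:ℝ)) • (fun t => Real.cos (0 * t)) := by
      funext t
      simp [q, evalPoly]
      ring
    rw [e]
    refine Submodule.add_mem _ (Submodule.sum_mem _ fun S _ => ?_)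
      (Submodule.smul_mem _ _ (Submodule.subset_span ⟨0, by simp; positivity, rfl⟩))
    by_cases h : p S = 0
    · simp [h]
    · exact Submodule.smul_mem _ _ (CS_mono (hdeg S h).le (CS_prod w hw S))
  have hqt : ∀ t, |q t - ∏ i, (1 + Real.cos (w i * t))/2| ≤ 3/32 := by
    intro t
    rw [← wt_and]
    show |evalPoly p (fun i => Real.cos (w i * t)) - _| ≤ _
    rw [← wt_eval, ← Finset.sum_sub_distrib]
    have hn := wt_nonneg (fun i => Real.cos (w i * t)) (fun i => Real.abs_cos_le_one _)
    calc _ ≤ ∑ b, wt (fun i => Real.cos (w i * t)) b * (3/32) := by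
          refine (Finset.abs_sum_le_sum_abs _ _).trans (Finset.sum_le_sum fun b _ => ?_)
          rw [← mul_sub, abs_mul, abs_of_nonneg (hn b)]
          exact mul_le_mul_of_nonneg_left (hcon b).le (hn b)
      _ = 3/32 := by rw [← Finset.sum_mul, wt_sum, one_mul]
  have hM : ∀ t, |q t - 1/2| ≤ 19/32 := by
    intro t
    have h1 : 0 ≤ ∏ i, (1 + Real.cos (w i * t))/2 := 
      Finset.prod_nonneg fun i _ => by linarith [Real.neg_one_le_cos (w i * t)]
    have h2 : ∏ i, (1 + Real.cos (w i * t))/2 ≤ 1 := 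
      Finset.prod_le_one (fun i _ => by linarith [Real.neg_one_le_cos (w i * t)])
        (fun i _ => by linarith [Real.cos_le_one (w i * t)])
    have := abs_le.mp (hqt t)
    rw [abs_le]; constructor <;> linarith
  have hT := CS_taylor _ (W/2) (19/32) (by positivity) hq hM (2/W) (by positivity)
  have e : (19/32:ℝ) * (W/2)^2 * (2/W)^2/2 = 19/64 := by field_simp; norm_num
  rw [e] at hT
  have h0 := abs_le.mp (hqt 0)
  simp only [mul_zero, Real.cos_zero] at h0
  norm_num at h0
  have h1 := abs_le.mp (hqt (2/W))
  have hP : ∏ i, (1 + Real.cos (w i * (2/W)))/2 ≤ 1/2 := by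
    have hi : ∀ i, (1 + Real.cos (w i * (2/W)))/2 ≤ (1 + (w i / W)^2)⁻¹ := by
      intro i
      have hle : w i / W ≤ 1 := (div_le_one hWp).mpr (hwW i)
      have hge : 0 ≤ w i / W := div_nonneg (hw i) hWp.le
      have hpi := Real.pi_gt_three
      have hc := Real.cos_le_one_div_sqrt_sq_add_one (x := w i / W) (by linarith) (by linarith)
      have hc0 : 0 ≤ Real.cos (w i / W) := Real.cos_nonneg_of_mem_Icc ⟨by linarith, by linarith⟩
      have : (1 + Real.cos (w i * (2/W)))/2 = Real.cos (w i / W)^2 := by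
        rw [show w i * (2/W) = 2 * (w i / W) by ring, Real.cos_two_mul]; ring
      rw [this]
      refine (pow_le_pow_left₀ hc0 hc 2).trans_eq ?_
      rw [div_pow, Real.sq_sqrt (by positivity), one_pow, one_div, add_comm]
    calc _ ≤ ∏ i, (1 + (w i / W)^2)⁻¹ := Finset.prod_le_prod
          (fun i _ => by linarith [Real.neg_one_le_cos (w i * (2/W))]) (fun i _ => hi i)
      _ = (∏ i, (1 + (w i / W)^2))⁻¹ := Finset.prod_inv_distrib _
      _ ≤ (2:ℝ)⁻¹ := by
          refine inv_anti₀ (by norm_num) ?_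
          have := prod_bound Finset.univ (fun i => (w i / W)^2) (fun i => sq_nonneg _)
          have e : ∑ i, (w i / W)^2 = 1 := by
            simp only [div_pow]
            rw [← Finset.sum_div, ← hW2]; field_simp
          linarith
      _ = 1/2 := by norm_num
  linarith [h0.1, h0.2, h1.1, h1.2]
end

section
/- There exist constants c₁, c₂ > 0 such that for every integer n ≥ 2, every real t > 0, every y ∈ {0,1}^n, and every real d with d > √(n·t·log n), there exists a multilinear real polynomial p of degree at most d and weight at most 2^{c₁·n·t·(log n)²/d} such that |p(x) − EQ_y(x)| ≤ n^{−c₂·t} for all x ∈ {0,1}^n. -/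
open Finset

/-- Evaluation of the multilinear polynomial with coefficients `c` over the parity
(Fourier) basis, identifying `{0,1}` with `{-1,1}` via `b ↦ (-1)^b`. -/
def evalPM {n : ℕ} (c : Finset (Fin n) → ℝ) (x : Fin n → Bool) : ℝ :=
  ∑ S : Finset (Fin n), c S * ∏ i ∈ S, (if x i then (-1 : ℝ) else 1)

/-- `EQ_y : {0,1}^n → {0,1}`, the point function of `y`. -/
def EQ {n : ℕ} (y : Fin n → Bool) (x : Fin n → Bool) : ℝ := if x = y then 1 else 0


def PRep {n : ℕ} (d : ℕ) (w : ℝ) (f : (Fin n → Bool) → ℝ) : Prop :=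
  ∃ p : Finset (Fin n) → ℝ, (∀ S, p S ≠ 0 → S.card ≤ d) ∧ (∑ S, |p S|) ≤ w ∧
    ∀ x, evalPM p x = f x

lemma PRep.mono {n d d' : ℕ} {w w' : ℝ} {f : (Fin n → Bool) → ℝ} (h : PRep d w f)
    (hd : d ≤ d') (hw : w ≤ w') : PRep d' w' f := by
  obtain ⟨p, h1, h2, h3⟩ := h
  exact ⟨p, fun S hS => (h1 S hS).trans hd, h2.trans hw, h3⟩

lemma PRep.congr {n d : ℕ} {w : ℝ} {f g : (Fin n → Bool) → ℝ} (h : PRep d w f)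
    (hfg : ∀ x, f x = g x) : PRep d w g := by
  obtain ⟨p, h1, h2, h3⟩ := h
  exact ⟨p, h1, h2, fun x => (h3 x).trans (hfg x)⟩

lemma PRep.single {n : ℕ} (S : Finset (Fin n)) (a : ℝ) :
    PRep S.card |a| (fun x => a * ∏ i ∈ S, (if x i then (-1 : ℝ) else 1)) := by
  refine ⟨fun T => if T = S then a else 0, ?_, ?_, ?_⟩
  · intro T hT
    by_cases h : T = S
    · rw [h]
    · simp [h] at hT
  · apply le_of_eq
    rw [Finset.sum_eq_single S]
    · simp
    · intro b _ hb; simp [hb]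
    · simp
  · intro x
    unfold evalPM
    rw [Finset.sum_eq_single S]
    · simp
    · intro b _ hb; simp [hb]
    · simp

lemma PRep.const {n : ℕ} (a : ℝ) : PRep (n := n) 0 |a| (fun _ => a) := by
  simpa using PRep.single (n := n) ∅ a

lemma PRep.add {n d : ℕ} {w w' : ℝ} {f g : (Fin n → Bool) → ℝ} (hf : PRep d w f)
    (hg : PRep d w' g) : PRep d (w + w') (fun x => f x + g x) := by
  obtain ⟨p, h1, h2, h3⟩ := hf
  obtain ⟨q, k1, k2, k3⟩ := hg
  refine ⟨fun S => p S + q S, ?_, ?_, ?_⟩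
  · intro S hS
    by_cases h : p S = 0
    · apply k1; intro h'; simp [h, h'] at hS
    · exact h1 S h
  · calc _ ≤ ∑ S, (|p S| + |q S|) := Finset.sum_le_sum fun S _ => abs_add_le _ _
      _ ≤ _ := by rw [Finset.sum_add_distrib]; linarith
  · intro x
    beta_reduce
    rw [← h3, ← k3]
    simp [evalPM, add_mul, Finset.sum_add_distrib]

lemma chi_symmDiff {n : ℕ} (S T : Finset (Fin n)) (x : Fin n → Bool) :
    ∏ i ∈ symmDiff S T, (if x i then (-1 : ℝ) else 1) =
    (∏ i ∈ S, (if x i then (-1 : ℝ) else 1)) * ∏ i ∈ T, (if x i then (-1 : ℝ) else 1) := by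
  have key : ∀ U : Finset (Fin n), ∏ i ∈ U, (if x i then (-1 : ℝ) else 1) =
      ∏ i, if i ∈ U then (if x i then (-1 : ℝ) else 1) else 1 := by
    intro U; simp [Finset.prod_ite_mem]
  rw [key, key S, key T, ← Finset.prod_mul_distrib]
  apply Finset.prod_congr rfl
  intro i _
  by_cases hS : i ∈ S <;> by_cases hT : i ∈ T <;> cases hx : x i <;>
    simp [Finset.mem_symmDiff, hS, hT]

lemma PRep.mul {n d d' : ℕ} {w w' : ℝ} {f g : (Fin n → Bool) → ℝ} (hf : PRep d w f)
    (hg : PRep d' w' g) : PRep (d + d') (w * w') (fun x => f x * g x) := by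
  obtain ⟨p, h1, h2, h3⟩ := hf
  obtain ⟨q, k1, k2, k3⟩ := hg
  refine ⟨fun U => ∑ S, ∑ T, if symmDiff S T = U then p S * q T else 0, ?_, ?_, ?_⟩
  · intro U hU
    obtain ⟨S, _, hS⟩ := Finset.exists_ne_zero_of_sum_ne_zero hU
    obtain ⟨T, _, hT⟩ := Finset.exists_ne_zero_of_sum_ne_zero hS
    have hST : symmDiff S T = U := by
      by_contra h; simp [h] at hT
    simp only [hST, if_true] at hT
    have a := h1 S (left_ne_zero_of_mul hT)
    have b := k1 T (right_ne_zero_of_mul hT)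
    have : U ⊆ S ∪ T := by
      rw [← hST]; intro i; simp [Finset.mem_symmDiff]; tauto
    have := Finset.card_le_card this
    have := Finset.card_union_le S T
    omega
  · have e : (∑ U : Finset (Fin n), ∑ S, ∑ T, |if symmDiff S T = U then p S * q T else 0|) =
        (∑ S, |p S|) * ∑ T, |q T| := by
      rw [Finset.sum_comm, Finset.sum_mul_sum]
      apply Finset.sum_congr rfl; intro S _
      rw [Finset.sum_comm]
      apply Finset.sum_congr rfl; intro T _
      rw [Finset.sum_eq_single (symmDiff S T)]
      · simp [abs_mul]
      · intro b _ hb; simp [hb.symm]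
      · simp
    calc _ ≤ ∑ U : Finset (Fin n), ∑ S, ∑ T, |if symmDiff S T = U then p S * q T else 0| := by
          apply Finset.sum_le_sum; intro U _
          refine (Finset.abs_sum_le_sum_abs _ _).trans ?_
          apply Finset.sum_le_sum; intro S _
          exact Finset.abs_sum_le_sum_abs _ _
      _ = _ := e
      _ ≤ _ := mul_le_mul h2 k2 (Finset.sum_nonneg fun _ _ => abs_nonneg _)
          ((Finset.sum_nonneg fun _ _ => abs_nonneg _).trans h2)
  · intro x
    beta_reduce
    rw [← h3, ← k3]
    unfold evalPM
    simp_rw [Finset.sum_mul]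
    rw [Finset.sum_comm]
    apply Finset.sum_congr rfl; intro S _
    rw [Finset.sum_comm, Finset.mul_sum]
    apply Finset.sum_congr rfl; intro T _
    rw [Finset.sum_eq_single (symmDiff S T)]
    · rw [if_pos rfl, chi_symmDiff]; ring
    · intro b _ hb; simp [hb.symm]
    · simp

lemma PRep.nonneg {n d : ℕ} {w : ℝ} {f : (Fin n → Bool) → ℝ} (h : PRep d w f) : 0 ≤ w := by
  obtain ⟨p, _, h2, _⟩ := h
  exact (Finset.sum_nonneg fun _ _ => abs_nonneg _).trans h2

lemma PRep.smul {n d : ℕ} {w : ℝ} {f : (Fin n → Bool) → ℝ} (h : PRep d w f) (a : ℝ) :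
    PRep d (|a| * w) (fun x => a * f x) := by
  simpa using (PRep.const a).mul h

lemma PRep.sum {n d : ℕ} {ι : Type*} (s : Finset ι) {w : ι → ℝ} {f : ι → (Fin n → Bool) → ℝ}
    (h : ∀ i ∈ s, PRep d (w i) (f i)) : PRep d (∑ i ∈ s, w i) (fun x => ∑ i ∈ s, f i x) := by
  classical
  induction s using Finset.induction_on with
  | empty => simpa using (PRep.const (n := n) 0).mono (Nat.zero_le d) le_rfl
  | insert a s ha ih =>
    simp only [Finset.sum_insert ha]
    exact (h a (by simp)).add (ih fun i hi => h i (by simp [hi]))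

lemma PRep.prod {n : ℕ} {ι : Type*} (s : Finset ι) {d : ι → ℕ} {w : ι → ℝ}
    {f : ι → (Fin n → Bool) → ℝ}
    (h : ∀ i ∈ s, PRep (d i) (w i) (f i)) :
    PRep (∑ i ∈ s, d i) (∏ i ∈ s, w i) (fun x => ∏ i ∈ s, f i x) := by
  classical
  induction s using Finset.induction_on with
  | empty => simpa using (PRep.const (n := n) 1)
  | insert a s ha ih =>
    simp only [Finset.sum_insert ha, Finset.prod_insert ha]
    exact (h a (by simp)).mul (ih fun i hi => h i (by simp [hi]))

lemma PRep.coord {n : ℕ} (y : Fin n → Bool) (i : Fin n) :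
    PRep 1 1 (fun x => if x i = y i then (1 : ℝ) else 0) := by
  have h1 := (PRep.const (n := n) (1/2)).mono (Nat.zero_le 1) le_rfl
  have h2 := PRep.single {i} (if y i then (-1/2 : ℝ) else 1/2)
  have h3 := h1.add (by simpa using h2)
  refine (h3.mono le_rfl ?_).congr ?_
  · cases y i <;> norm_num [abs_of_pos, abs_of_neg]
  · intro x
    cases hx : x i <;> cases hy : y i <;> norm_num

lemma PRep.block {n : ℕ} (y : Fin n → Bool) (B : Finset (Fin n)) :
    PRep B.card 1 (fun x => if ∀ i ∈ B, x i = y i then (1 : ℝ) else 0) := by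
  have := PRep.prod B (d := fun _ => 1) (w := fun _ => 1) (fun i _ => PRep.coord y i)
  refine (this.mono (by simp) (by simp)).congr ?_
  intro x
  rw [Finset.prod_ite_zero]
  simp

lemma PRep.cheb {n d : ℕ} {f : (Fin n → Bool) → ℝ} (h : PRep d 3 f) (r : ℕ) :
    PRep (d * r) (7 ^ r) (fun x => (Polynomial.Chebyshev.T ℝ (r : ℤ)).eval (f x)) := by
  induction r using Nat.strong_induction_on with
  | _ r ih =>
    match r with
    | 0 => simpa using PRep.const (n := n) 1
    | 1 => simpa using h.mono le_rfl (by norm_num)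
    | r + 2 =>
      have a := ((h.mul (ih (r+1) (by omega))).smul 2)
      have b := (ih r (by omega)).smul (-1)
      have c := (a.mono (d' := d * (r+2)) (by linarith) le_rfl).add
        (b.mono (d' := d * (r+2)) (Nat.mul_le_mul le_rfl (by omega)) le_rfl)
      refine (c.mono le_rfl ?_).congr ?_
      · have : (0:ℝ) < 7 ^ r := by positivity
        norm_num [pow_succ]; nlinarith
      · intro x
        push_cast
        rw [Polynomial.Chebyshev.T_add_two]
        simp; ring

lemma cheb_ge (δ : ℝ) (hδ : 0 ≤ δ) (r : ℕ) :
    1 + (r : ℝ)^2 * δ ≤ (Polynomial.Chebyshev.T ℝ (r : ℤ)).eval (1 + δ) := by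
  have key : ∀ r : ℕ, 1 + (r : ℝ)^2 * δ ≤ (Polynomial.Chebyshev.T ℝ (r : ℤ)).eval (1 + δ) ∧
      (Polynomial.Chebyshev.T ℝ (r : ℤ)).eval (1 + δ) + (2 * r + 1) * δ ≤
      (Polynomial.Chebyshev.T ℝ ((r + 1 : ℕ) : ℤ)).eval (1 + δ) := by
    intro r
    induction r with
    | zero => simp
    | succ r ih =>
      obtain ⟨h1, h2⟩ := ih
      have h3 : 1 + ((r + 1 : ℕ) : ℝ)^2 * δ ≤
          (Polynomial.Chebyshev.T ℝ ((r + 1 : ℕ) : ℤ)).eval (1 + δ) := by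
        push_cast at *
        nlinarith
      refine ⟨h3, ?_⟩
      have e : (Polynomial.Chebyshev.T ℝ ((r + 1 + 1 : ℕ) : ℤ)).eval (1 + δ) =
          2 * (1 + δ) * (Polynomial.Chebyshev.T ℝ ((r + 1 : ℕ) : ℤ)).eval (1 + δ) -
          (Polynomial.Chebyshev.T ℝ (r : ℤ)).eval (1 + δ) := by
        have : ((r + 1 + 1 : ℕ) : ℤ) = (r : ℤ) + 2 := by push_cast; ring
        rw [this, Polynomial.Chebyshev.T_add_two]
        simp
      rw [e]
      have h4 : 1 ≤ (Polynomial.Chebyshev.T ℝ ((r + 1 : ℕ) : ℤ)).eval (1 + δ) := by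
        refine le_trans ?_ h3
        have : 0 ≤ ((r + 1 : ℕ) : ℝ)^2 * δ := by positivity
        linarith
      have h5 := mul_le_mul_of_nonneg_right h4 hδ
      push_cast at *
      nlinarith
  exact (key r).1

lemma sum_inv_sqrt (k : ℕ) : ∑ i ∈ Finset.range k, 1 / √((i : ℝ) + 1) ≤ 2 * √(k : ℝ) := by
  induction k with
  | zero => simp
  | succ k ih =>
    rw [Finset.sum_range_succ]
    have h1 : √(k : ℝ) ^ 2 = k := Real.sq_sqrt (by positivity)
    have h2 : √((k : ℝ) + 1) ^ 2 = k + 1 := Real.sq_sqrt (by positivity)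
    have h3 : 0 < √((k : ℝ) + 1) := by positivity
    have : 1 / √((k : ℝ) + 1) ≤ 2 * √((k : ℝ) + 1) - 2 * √(k : ℝ) := by
      rw [div_le_iff₀ h3]
      nlinarith [sq_nonneg (√((k : ℝ) + 1) - √(k : ℝ))]
    push_cast
    linarith

lemma ceil_sqrt_bd (m i : ℝ) (hi : 0 < i) (him : i ≤ m) :
    ∃ r : ℕ, 1 ≤ r ∧ m / i ≤ (r : ℝ)^2 ∧ (r : ℝ) ≤ 2 * (√m * (1 / √i)) := by
  have h1 : 1 ≤ √(m / i) := by
    rw [Real.one_le_sqrt, le_div_iff₀ hi]; linarith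
  refine ⟨⌈√(m / i)⌉₊, Nat.one_le_iff_ne_zero.mpr (by positivity), ?_, ?_⟩
  · exact (Real.sqrt_le_left (by positivity)).mp (Nat.le_ceil _)
  · have := Nat.ceil_lt_add_one (a := √(m / i)) (by positivity)
    have e : √(m / i) = √m * (1 / √i) := by rw [Real.sqrt_div' _ hi.le]; ring
    rw [← e]; linarith

lemma rootfac (m i : ℝ) (hi : 0 < i) (him : i ≤ m) :
    ∃ r : ℕ, ∃ M : ℝ, (r : ℝ) ≤ 2 * (√m * (1 / √i)) ∧ m ≤ M ∧
      (Polynomial.Chebyshev.T ℝ (r : ℤ)).eval (1 - 2 * i / M) = 0 := by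
  obtain ⟨r, h1, h2, h3⟩ := ceil_sqrt_bd m i hi him
  have hr : (1:ℝ) ≤ r := by exact_mod_cast h1
  set θ : ℝ := Real.pi / (4 * r) with hθ
  have hθ0 : 0 < θ := by positivity
  have hθ1 : θ ≤ 1 / r := by
    rw [hθ, div_le_div_iff₀ (by positivity) (by positivity)]
    nlinarith [Real.pi_le_four]
  have hθpi : θ < Real.pi := by
    rw [hθ, div_lt_iff₀ (by positivity)]
    nlinarith [Real.pi_pos]
  have hs0 : 0 < Real.sin θ := Real.sin_pos_of_pos_of_lt_pi hθ0 hθpi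
  have hs1 : Real.sin θ ≤ 1 / r := (Real.sin_le hθ0.le).trans hθ1
  refine ⟨r, i / Real.sin θ ^ 2, h3, ?_, ?_⟩
  · rw [le_div_iff₀ (by positivity)]
    have : Real.sin θ ^ 2 ≤ (1 / r)^2 := by gcongr
    have h4 : m * (1 / r)^2 ≤ i := by
      rw [div_le_iff₀ hi] at h2
      rw [div_pow, one_pow, mul_one_div, div_le_iff₀ (by positivity)]
      linarith
    have : m * Real.sin θ ^ 2 ≤ m * (1 / r)^2 := by
      apply mul_le_mul_of_nonneg_left this; linarith
    linarith
  · have e : 1 - 2 * i / (i / Real.sin θ ^ 2) = Real.cos (2 * θ) := by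
      rw [Real.cos_two_mul, Real.cos_sq']
      field_simp
      ring
    rw [e, Polynomial.Chebyshev.T_real_cos]
    have : ((r : ℤ) : ℝ) * (2 * θ) = Real.pi / 2 := by
      rw [hθ]; push_cast; field_simp; ring
    rw [this, Real.cos_pi_div_two]

lemma PRep.affine {n b : ℕ} {Z : (Fin n → Bool) → ℝ} {m : ℝ} (hZ : PRep b m Z)
    (M a : ℝ) (hM : m ≤ M) (hm : 0 < m) (ha : 0 ≤ a) (ham : a ≤ m) :
    PRep b 3 (fun x => (1 + 2 * a / M - 2 * m / M) + (2 / M) * Z x) := by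
  have h1 := (PRep.const (n := n) (1 + 2 * a / M - 2 * m / M)).mono (Nat.zero_le b) le_rfl
  refine (h1.add (hZ.smul (2 / M))).mono le_rfl ?_
  have hM0 : 0 < M := by linarith
  have e1 : m / M ≤ 1 := by rw [div_le_one hM0]; exact hM
  have e2 : a / M ≤ m / M := by gcongr
  have e3 : 0 ≤ a / M := by positivity
  have e4 : |2 / M| * m = 2 * (m / M) := by
    rw [abs_of_pos (by positivity)]; ring
  rw [e4, mul_div_assoc, mul_div_assoc]
  have : |1 + 2 * (a / M) - 2 * (m / M)| ≤ 1 := by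
    rw [abs_le]; constructor <;> linarith
  linarith

lemma outer (m k : ℕ) (hk : 1 ≤ k) (hkm : k < m) :
    ∃ R : ℕ, (R : ℝ) ≤ 6 * √((m : ℝ) * k) ∧
      ∀ (n b : ℕ) (Z : (Fin n → Bool) → ℝ), PRep b m Z →
      ∃ f, PRep (b * R) (7 ^ R) f ∧ ∀ x, ∀ s : ℕ, s ≤ m → Z x = m - s →
        (s = 0 → f x = 1) ∧ (s ≠ 0 → |f x| ≤ Real.exp (-k)) := by
  have hk0 : (0:ℝ) < k := by exact_mod_cast hk
  have hkm' : (k:ℝ) ≤ m := by exact_mod_cast hkm.le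
  have hm0 : (0:ℝ) < m := by linarith
  have hroot : ∀ i : ℕ, ∃ r : ℕ, ∃ M : ℝ, i < k → ((r : ℝ) ≤ 2 * (√m * (1 / √((i : ℝ) + 1))) ∧
      m ≤ M ∧ (Polynomial.Chebyshev.T ℝ (r : ℤ)).eval (1 - 2 * ((i : ℝ) + 1) / M) = 0) := by
    intro i
    by_cases h : i < k
    · have : (i : ℝ) + 1 ≤ k := by exact_mod_cast h
      obtain ⟨r, M, h1⟩ := rootfac m ((i : ℝ) + 1) (by positivity) (by linarith)
      exact ⟨r, M, fun _ => h1⟩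
    · exact ⟨0, 0, fun h' => absurd h' h⟩
  choose r M hrM using hroot
  obtain ⟨r0, hr1, hr2, hr3⟩ := ceil_sqrt_bd m k hk0 hkm'
  refine ⟨∑ i ∈ Finset.range k, r i + r0 * k, ?_, ?_⟩
  · push_cast
    have h1 : ∑ i ∈ Finset.range k, (r i : ℝ) ≤
        2 * √m * ∑ i ∈ Finset.range k, 1 / √((i : ℝ) + 1) := by
      rw [Finset.mul_sum]
      apply Finset.sum_le_sum
      intro i hi
      have := (hrM i (Finset.mem_range.mp hi)).1
      linarith
    have h2 := mul_le_mul_of_nonneg_left (sum_inv_sqrt k) (by positivity : 0 ≤ 2 * √(m : ℝ))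
    have h3 : (r0 : ℝ) * k ≤ 2 * (√m * √k) := by
      have := mul_le_mul_of_nonneg_right hr3 hk0.le
      have e : 2 * (√(m:ℝ) * (1 / √(k:ℝ))) * k = 2 * (√m * √k) := by
        have : √(k:ℝ) ≠ 0 := by positivity
        nth_rewrite 2 [← Real.mul_self_sqrt hk0.le]
        field_simp
      linarith
    rw [Real.sqrt_mul hm0.le]
    linarith
  · intro n b Z hZ
    set τ : ℝ := (Polynomial.Chebyshev.T ℝ (r0 : ℤ)).eval (1 + 2 * (k : ℝ) / m) with hτ
    have hτ3 : 3 ≤ τ := by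
      refine le_trans ?_ (cheb_ge (2 * (k : ℝ) / m) (by positivity) r0)
      have : (1:ℝ) ≤ (r0 : ℝ)^2 * (k / m) := by
        rw [div_le_iff₀ hk0] at hr2
        rw [← mul_div_assoc, le_div_iff₀ hm0]; linarith
      rw [mul_div_assoc]; linarith
    let u : ℕ → (Fin n → Bool) → ℝ := fun i x =>
      (Polynomial.Chebyshev.T ℝ (r i : ℤ)).eval
        ((1 + 2 * 0 / M i - 2 * m / M i) + (2 / M i) * Z x)
    let v : (Fin n → Bool) → ℝ := fun x =>
      τ⁻¹ * (Polynomial.Chebyshev.T ℝ (r0 : ℤ)).eval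
        ((1 + 2 * (k:ℝ) / m - 2 * m / m) + (2 / m) * Z x)
    have hu : ∀ i ∈ Finset.range k, PRep (b * r i) (7 ^ r i) (u i) := by
      intro i hi
      exact (hZ.affine (M i) 0 (hrM i (Finset.mem_range.mp hi)).2.1 hm0 le_rfl hm0.le).cheb (r i)
    have hv : PRep (b * r0) (7 ^ r0) v := by
      refine ((((hZ.affine m k le_rfl hm0 hk0.le hkm').cheb r0)).smul τ⁻¹).mono le_rfl ?_
      have : |τ⁻¹| ≤ 1 := by
        rw [abs_of_pos (by positivity)]
        exact inv_le_one_of_one_le₀ (by linarith)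
      have h7 : (0:ℝ) < 7 ^ r0 := by positivity
      nlinarith
    have hvk := PRep.prod (Finset.range k) (fun _ _ => hv)
    have huk := PRep.prod (Finset.range k) hu
    refine ⟨_, (huk.mul hvk).mono ?_ ?_, ?_⟩
    · apply le_of_eq
      rw [← Finset.mul_sum, Finset.sum_const, Finset.card_range, smul_eq_mul]; ring
    · apply le_of_eq
      rw [Finset.prod_pow_eq_pow_sum, Finset.prod_const, Finset.card_range, pow_add, pow_mul]
    · intro x s hs hZx
      have hsm : (s : ℝ) ≤ m := by exact_mod_cast hs
      have hs0 : (0 : ℝ) ≤ s := by positivity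
      have eu : ∀ i ∈ Finset.range k, u i x =
          (Polynomial.Chebyshev.T ℝ (r i : ℤ)).eval (1 - 2 * (s : ℝ) / M i) := by
        intro i _
        simp only [u]
        rw [hZx]; congr 1; ring
      have ev : v x = τ⁻¹ * (Polynomial.Chebyshev.T ℝ (r0 : ℤ)).eval
          (1 + 2 * (k:ℝ) / m - 2 * s / m) := by
        simp only [v]
        rw [hZx]; congr 2; ring
      beta_reduce
      rw [Finset.prod_congr rfl eu, ev, Finset.prod_const, Finset.card_range]
      constructor
      · rintro rfl
        have : τ ≠ 0 := by positivity
        simp [← hτ, this]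
      · intro hsne
        by_cases hsk : s ≤ k
        · have hz : ∏ i ∈ Finset.range k,
              (Polynomial.Chebyshev.T ℝ (r i : ℤ)).eval (1 - 2 * (s : ℝ) / M i) = 0 := by
            apply Finset.prod_eq_zero (i := s - 1)
            · simp; omega
            · have := (hrM (s-1) (by omega)).2.2
              have e : ((s - 1 : ℕ) : ℝ) + 1 = s := by
                rw [Nat.cast_sub (by omega)]; simp
              rw [e] at this
              exact this
          rw [hz]; simp; positivity
        · have hks : (k:ℝ) ≤ s := by exact_mod_cast (not_le.mp hsk).le
          have hprod : |∏ i ∈ Finset.range k,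
              (Polynomial.Chebyshev.T ℝ (r i : ℤ)).eval (1 - 2 * (s : ℝ) / M i)| ≤ 1 := by
            rw [Finset.abs_prod]
            apply Finset.prod_le_one (fun _ _ => abs_nonneg _)
            intro i hi
            apply Polynomial.Chebyshev.abs_eval_T_real_le_one
            have hM := (hrM i (Finset.mem_range.mp hi)).2.1
            have hM0 : 0 < M i := by linarith
            have e1 : s / M i ≤ 1 := by rw [div_le_one hM0]; linarith
            have e2 : 0 ≤ s / M i := by positivity
            rw [mul_div_assoc, abs_le]; constructor <;> linarith
          have hT : |(Polynomial.Chebyshev.T ℝ (r0 : ℤ)).eval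
              (1 + 2 * (k:ℝ) / m - 2 * s / m)| ≤ 1 := by
            apply Polynomial.Chebyshev.abs_eval_T_real_le_one
            have e1 : (s:ℝ) / m ≤ 1 := by rw [div_le_one hm0]; linarith
            have e2 : (k:ℝ) / m ≤ s / m := by gcongr
            have e3 : 0 ≤ (k:ℝ) / m := by positivity
            rw [mul_div_assoc, mul_div_assoc, abs_le]; constructor <;> linarith
          have hg : |τ⁻¹ * (Polynomial.Chebyshev.T ℝ (r0 : ℤ)).eval
              (1 + 2 * (k:ℝ) / m - 2 * s / m)| ≤ Real.exp (-1) := by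
            rw [abs_mul, abs_of_pos (by positivity : 0 < τ⁻¹), Real.exp_neg]
            have : τ⁻¹ ≤ (Real.exp 1)⁻¹ := by
              apply inv_anti₀ (Real.exp_pos 1)
              have := Real.exp_one_lt_d9
              linarith
            calc _ ≤ (Real.exp 1)⁻¹ * 1 := by gcongr
              _ = _ := mul_one _
          rw [abs_mul, abs_pow]
          calc _ ≤ 1 * Real.exp (-1) ^ k := by gcongr
            _ = _ := by rw [one_mul, ← Real.exp_nat_mul]; simp

lemma key (n b k : ℕ) (hb : 1 ≤ b) (hk : 1 ≤ k) (y : Fin n → Bool) :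
    ∃ R : ℕ, (R : ℝ) ≤ 6 * √(((n / b + 1 : ℕ) : ℝ) * k) ∧
      ∃ f, PRep (b * R) (7 ^ R) f ∧ ∀ x, |f x - EQ y x| ≤ Real.exp (-k) := by
  set m := n / b + 1 with hm
  let B : ℕ → Finset (Fin n) := fun j => Finset.univ.filter (fun i => i.val / b = j)
  have hB : ∀ j, (B j).card ≤ b := by
    intro j
    have : (B j).card ≤ (Finset.Ico (j * b) (j * b + b)).card := by
      apply Finset.card_le_card_of_injOn (fun i => i.val)
      · intro i hi
        simp only [B, Finset.coe_filter, Finset.mem_univ, true_and, Set.mem_ofPred_eq] at hi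
        have h1 := Nat.div_add_mod i.val b
        have h2 := Nat.mod_lt i.val (by omega : b > 0)
        rw [hi, mul_comm] at h1
        simp; omega
      · intro i _ j _ h; exact Fin.ext h
    simpa using this
  let z : ℕ → (Fin n → Bool) → ℝ := fun j x => if ∀ i ∈ B j, x i = y i then (1 : ℝ) else 0
  have hz : ∀ j, PRep b 1 (z j) := fun j => (PRep.block y (B j)).mono (hB j) le_rfl
  have hall : ∀ x, x = y ↔ ∀ j ∈ Finset.range m, ∀ i ∈ B j, x i = y i := by
    intro x
    constructor
    · rintro rfl; simp
    · intro h
      funext i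
      refine h (i.val / b) ?_ i (by simp [B])
      simp only [Finset.mem_range, hm]
      exact Nat.lt_succ_of_le (Nat.div_le_div_right i.isLt.le)
  by_cases hkm : k < m
  · obtain ⟨R, hR, h⟩ := outer m k hk hkm
    have hZ : PRep b m (fun x => ∑ j ∈ Finset.range m, z j x) :=
      (PRep.sum (Finset.range m) (fun j _ => hz j)).mono le_rfl (by simp)
    obtain ⟨f, hf, hfx⟩ := h n b _ hZ
    refine ⟨R, hR, f, hf, ?_⟩
    intro x
    let F := (Finset.range m).filter (fun j => ¬ ∀ i ∈ B j, x i = y i)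
    have hF : F.card ≤ m := by simpa using Finset.card_filter_le (Finset.range m) _
    have hZF : ∑ j ∈ Finset.range m, z j x = m - F.card := by
      simp only [z, F]
      rw [Finset.sum_boole]
      have := Finset.card_filter_add_card_filter_not (s := Finset.range m)
        (fun j => ∀ i ∈ B j, x i = y i)
      rw [Finset.card_range] at this
      rw [eq_sub_iff_add_eq]
      exact_mod_cast this
    obtain ⟨h1, h2⟩ := hfx x F.card hF hZF
    have hF0 : F.card = 0 ↔ x = y := by
      rw [hall, Finset.card_eq_zero, Finset.filter_eq_empty_iff]
      simp only [not_not]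
    by_cases hxy : x = y
    · rw [h1 (hF0.mpr hxy)]
      simp [EQ, hxy]; positivity
    · have := h2 (fun h => hxy (hF0.mp h))
      simpa [EQ, hxy] using this
  · have hmk : (m : ℝ) ≤ k := by exact_mod_cast not_lt.mp hkm
    refine ⟨m, ?_, fun x => EQ y x, ?_, ?_⟩
    · have : (m : ℝ) ≤ √((m : ℝ) * k) := by
        apply Real.le_sqrt_of_sq_le
        rw [sq]; gcongr
      have := Real.sqrt_nonneg ((m : ℝ) * k)
      linarith
    · have h := PRep.prod (Finset.range m) (fun j _ => hz j)
      refine (h.mono (d' := b * m) (w' := 7 ^ m) (by simp [mul_comm]) ?_).congr ?_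
      · simp only [Finset.prod_const_one]
        exact one_le_pow₀ (by norm_num)
      · intro x
        simp only [z, EQ]
        rw [Finset.prod_ite_zero, Finset.prod_const_one]
        by_cases hxy : x = y
        · rw [if_pos ((hall x).mp hxy), if_pos hxy]
        · rw [if_neg (fun h => hxy ((hall x).mpr h)), if_neg hxy]
    · intro x; simp; positivity

set_option maxHeartbeats 2000000
theorem stmt8 :
    ∃ c₁ c₂ : ℝ, 0 < c₁ ∧ 0 < c₂ ∧
      ∀ (n : ℕ), 2 ≤ n →
        ∀ t : ℝ, 0 < t →
          ∀ y : Fin n → Bool,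
            ∀ d : ℝ, Real.sqrt ((n : ℝ) * t * Real.log n) < d →
              ∃ p : Finset (Fin n) → ℝ,
                (∀ S : Finset (Fin n), p S ≠ 0 → (S.card : ℝ) ≤ d) ∧
                (∑ S : Finset (Fin n), |p S|) ≤
                  (2 : ℝ) ^ (c₁ * (n : ℝ) * t * (Real.log n) ^ 2 / d) ∧
                ∀ x, |evalPM p x - EQ y x| ≤ (n : ℝ) ^ (-(c₂ * t)) := by
  refine ⟨12, 1/216, by norm_num, by norm_num, ?_⟩
  intro n hn t ht y d hd
  have hn2 : (2:ℝ) ≤ n := by exact_mod_cast hn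
  have hn0 : (0:ℝ) < n := by linarith
  have hlog2 : Real.log 2 ≤ Real.log n := Real.log_le_log (by norm_num) hn2
  have hl2 := Real.log_two_gt_d9
  set l := Real.log n with hl
  have hl0 : 0 < l := by linarith
  have hd0 : 0 < d := (Real.sqrt_nonneg _).trans_lt hd
  have hdsq : n * t * l < d ^ 2 := by
    rw [Real.sqrt_lt' hd0] at hd; exact hd
  have hexp0 : 0 ≤ 12 * (n:ℝ) * t * l ^ 2 / d := by positivity
  have hw1 : (1:ℝ) ≤ (2:ℝ) ^ (12 * (n:ℝ) * t * l ^ 2 / d) :=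
    Real.one_le_rpow (by norm_num) hexp0
  have herr : (n:ℝ) ^ (-(1/216 * t)) = Real.exp (-(1/216 * (t * l))) := by
    rw [Real.rpow_def_of_pos hn0, ← hl]; congr 1; ring
  rw [herr]
  set L := t * l with hL
  have hL0 : 0 < L := by positivity
  suffices h : ∃ (D : ℕ) (w : ℝ) (f : (Fin n → Bool) → ℝ), PRep D w f ∧ (D : ℝ) ≤ d ∧
      w ≤ (2:ℝ) ^ (12 * (n:ℝ) * t * l ^ 2 / d) ∧
      ∀ x, |f x - EQ y x| ≤ Real.exp (-(1/216 * L)) by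
    obtain ⟨D, w, f, ⟨p, h1, h2, h3⟩, hD, hw, hf⟩ := h
    refine ⟨p, fun S hS => le_trans (by exact_mod_cast h1 S hS) hD, h2.trans hw, ?_⟩
    intro x; rw [h3]; exact hf x
  by_cases hsmall : 1/216 * L ≤ Real.log 2
  · refine ⟨0, |1/2|, fun _ => 1/2, PRep.const _, by simpa using hd0.le, ?_, ?_⟩
    · refine le_trans ?_ hw1
      rw [abs_of_pos] <;> norm_num
    · intro x
      have h1 : (1:ℝ)/2 ≤ Real.exp (-(1/216 * L)) := by
        calc (1:ℝ)/2 = Real.exp (-Real.log 2) := by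
              rw [Real.exp_neg, Real.exp_log (by norm_num)]; norm_num
          _ ≤ _ := Real.exp_le_exp.mpr (by linarith)
      refine le_trans ?_ h1
      unfold EQ
      split_ifs <;> norm_num [abs_of_pos, abs_of_neg]
  push Not at hsmall
  by_cases hdn : (n:ℝ) ≤ d
  · refine ⟨n, 1, fun x => EQ y x, ?_, hdn, hw1, ?_⟩
    · refine ((PRep.block y Finset.univ).mono (by simp) le_rfl).congr ?_
      intro x
      simp [EQ, funext_iff]
    · intro x; simp; positivity
  push Not at hdn
  set k := ⌈1/216 * L⌉₊ with hk
  have hk1 : 1 ≤ k := Nat.one_le_iff_ne_zero.mpr (by positivity)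
  have hk1' : (1:ℝ) ≤ k := by exact_mod_cast hk1
  have hkL : 1/216 * L ≤ k := Nat.le_ceil _
  have hkU : (k:ℝ) ≤ 3 * (1/216 * L) := by
    have := Nat.ceil_lt_add_one (a := 1/216 * L) (by positivity)
    linarith
  have hnL : n * L < d ^ 2 := by rw [hL]; linarith
  set q : ℝ := d ^ 2 / (72 * n * k) with hq
  have hden : (0:ℝ) < 72 * n * k := by positivity
  have hq1 : 1 ≤ q := by
    rw [hq, le_div_iff₀ hden]
    nlinarith
  set b := ⌊q⌋₊ with hb
  have hb1 : 1 ≤ b := Nat.one_le_floor_iff q |>.mpr hq1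
  have hb1' : (1:ℝ) ≤ b := by exact_mod_cast hb1
  have hbq : (b:ℝ) ≤ q := Nat.floor_le (by linarith)
  have hbq' : q ≤ 2 * b := by
    have := Nat.lt_floor_add_one q
    linarith
  have hbn : (b:ℝ) ≤ n := by
    refine hbq.trans ?_
    rw [hq, div_le_iff₀ hden]
    have : d ^ 2 ≤ n ^ 2 := by gcongr
    nlinarith [mul_le_mul_of_nonneg_left hk1' (sq_nonneg (n:ℝ))]
  obtain ⟨R, hR, f, hf, hfx⟩ := key n b k hb1 hk1 y
  have hbm : (b:ℝ) * ((n / b + 1 : ℕ) : ℝ) ≤ 2 * n := by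
    have h1 : b * (n / b + 1) ≤ n + b := by
      have := Nat.mul_div_le n b
      rw [mul_add]; omega
    have h2 : (b:ℝ) * ((n / b + 1 : ℕ) : ℝ) ≤ n + b := by exact_mod_cast h1
    linarith
  have hbR : (b:ℝ) * R ≤ d := by
    have h1 : (b:ℝ) * R ≤ 6 * (b * √(((n / b + 1 : ℕ) : ℝ) * k)) := by nlinarith
    refine h1.trans ?_
    apply le_of_sq_le_sq _ hd0.le
    rw [mul_pow, mul_pow, Real.sq_sqrt (by positivity)]
    rw [hq, le_div_iff₀ hden] at hbq
    have : (b:ℝ) * k * (b * ((n / b + 1 : ℕ) : ℝ)) ≤ b * k * (2 * n) := by gcongr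
    nlinarith
  refine ⟨b * R, 7 ^ R, f, hf, by push_cast; exact hbR, ?_, ?_⟩
  · have hRd : (R:ℝ) * d ≤ 2 * (n * L) := by
      have h1 : d ^ 2 ≤ 2 * b * (72 * n * k) := by
        rw [hq, div_le_iff₀ hden] at hbq'; exact hbq'
      have h2 : (R:ℝ) * d ^ 2 ≤ d * (144 * n * k) := by
        calc (R:ℝ) * d ^ 2 ≤ R * (2 * b * (72 * n * k)) := by gcongr
          _ = (b * R) * (144 * n * k) := by ring
          _ ≤ _ := by gcongr
      have h3 : (R:ℝ) * d ≤ 144 * n * k := by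
        apply le_of_mul_le_mul_left _ hd0
        nlinarith
      have h4 : (n:ℝ) * k ≤ n * (3 * (1/216 * L)) := by gcongr
      linarith
    have hll : L ≤ 2 * (t * l ^ 2) := by
      rw [hL]; nlinarith [mul_pos ht hl0]
    have hR3 : 3 * (R:ℝ) ≤ 12 * (n:ℝ) * t * l ^ 2 / d := by
      rw [le_div_iff₀ hd0]
      have : (n:ℝ) * L ≤ n * (2 * (t * l ^ 2)) := by gcongr
      linarith
    calc (7:ℝ) ^ R ≤ 8 ^ R := by gcongr; norm_num
      _ = (2:ℝ) ^ (3 * (R:ℝ)) := by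
        rw [Real.rpow_mul (by norm_num), Real.rpow_natCast]; norm_num
      _ ≤ _ := Real.rpow_le_rpow_of_exponent_le (by norm_num) hR3
  · intro x
    exact (hfx x).trans (Real.exp_le_exp.mpr (by linarith))
end

section
/- Let n, K, w be integers with 1 ≤ K, 0 ≤ w ≤ K, and n ≥ 64K, and let p_w be the unique univariate real polynomial of degree at most K with p_w(1 − 2h/n) = C(K,w)·C(n−K,h−w)/C(n,h) for every integer 0 ≤ h ≤ n. Then for every integer k ≥ 1 there exists a univariate real polynomial q of degree at most k such that |p_w(t) − q(t)| ≤ 4·√K·exp(−k²/(1156·K)) for all t ∈ [−1, 1]. -/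
/-- The probability that a uniformly random string in `{0,1}^n` of Hamming weight `h`
has exactly `w` ones among its first `K` coordinates: `C(K,w)·C(n-K,h-w)/C(n,h)`,
where out-of-range binomial coefficients are `0`. -/
noncomputable def pval (n K w h : ℕ) : ℝ :=
  if w ≤ h then (K.choose w : ℝ) * ((n - K).choose (h - w) : ℝ) / (n.choose h : ℝ) else 0

open Polynomial in
/-- Cauchy estimate for polynomial coefficients. -/
theorem aux_cauchy (G : ℂ[X]) (r M : ℝ) (hr : 0 < r) (h : ∀ z : ℂ, ‖z‖ = r → ‖G.eval z‖ ≤ M) (m : ℕ) :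
    ‖G.coeff m‖ ≤ M / r ^ m := by
  have h1 := Complex.norm_iteratedDeriv_le_of_forall_mem_sphere_norm_le (c := 0) (R := r) (C := M)
    (f := fun z => G.eval z) m hr (G.differentiable.diffContOnCl)
    (fun z hz => h z (by simpa using hz))
  have h2 : ∀ m : ℕ, iteratedDeriv m (fun z => G.eval z) = fun z => (derivative^[m] G).eval z := by
    intro m
    induction m with
    | zero => simp
    | succ m ih =>
      rw [iteratedDeriv_succ, ih]
      funext z
      rw [Polynomial.deriv, Function.iterate_succ_apply']
  rw [h2] at h1
  simp only [] at h1
  rw [← coeff_zero_eq_eval_zero, coeff_iterate_derivative] at h1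
  simp only [zero_add, Nat.descFactorial_self, nsmul_eq_mul, norm_mul, Complex.norm_natCast] at h1
  rw [mul_div_assoc] at h1
  exact le_of_mul_le_mul_left h1 (by positivity)

theorem aux_T (z : ℂ) (hz : z ≠ 0) (j : ℕ) :
    (Polynomial.Chebyshev.T ℂ j).eval ((z + z⁻¹) / 2) = (z ^ j + (z⁻¹) ^ j) / 2 := by
  have h := Polynomial.Chebyshev.T_complex_cosh (Complex.log z) j
  have e1 : Complex.cosh (Complex.log z) = (z + z⁻¹) / 2 := by
    rw [Complex.cosh, Complex.exp_neg, Complex.exp_log hz]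
  have e2 : Complex.cosh (((j : ℤ) : ℂ) * Complex.log z) = (z ^ j + (z⁻¹) ^ j) / 2 := by
    rw [Complex.cosh, Complex.exp_neg, Int.cast_natCast, Complex.exp_nat_mul, Complex.exp_log hz, inv_pow]
  rw [e1, e2] at h
  exact h

open Polynomial in
theorem aux_expand (m : ℕ) : ∀ p : ℝ[X], p.natDegree ≤ m →
    ∃ c : ℕ → ℝ, p = ∑ j ∈ Finset.range (m + 1), C (c j) * Chebyshev.T ℝ (j : ℤ) := by
  induction m with
  | zero =>
    intro p hp
    refine ⟨fun _ => p.coeff 0, ?_⟩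
    simpa using Polynomial.eq_C_of_natDegree_le_zero hp
  | succ m ih =>
    intro p hp
    have hT : (Chebyshev.T ℝ ((m + 1 : ℕ) : ℤ)).natDegree = m + 1 := by
      rw [Chebyshev.natDegree_T]; exact Int.natAbs_natCast _
    have hl : (Chebyshev.T ℝ ((m + 1 : ℕ) : ℤ)).coeff (m + 1) ≠ 0 := by
      have := leadingCoeff_ne_zero.mpr (Chebyshev.T_ne_zero ℝ ((m + 1 : ℕ) : ℤ))
      rwa [leadingCoeff, hT] at this
    set a := p.coeff (m + 1) / (Chebyshev.T ℝ ((m + 1 : ℕ) : ℤ)).coeff (m + 1) with ha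
    obtain ⟨c, hc⟩ := ih (p - C a * Chebyshev.T ℝ ((m + 1 : ℕ) : ℤ)) (by
      rw [natDegree_le_iff_coeff_eq_zero]
      intro N hN
      rcases Nat.lt_or_ge (m + 1) N with h | h
      · rw [coeff_sub, coeff_C_mul, coeff_eq_zero_of_natDegree_lt (by omega),
          coeff_eq_zero_of_natDegree_lt (by omega)]
        simp
      · obtain rfl : N = m + 1 := by omega
        rw [coeff_sub, coeff_C_mul, ha, div_mul_cancel₀ _ hl, sub_self])
    refine ⟨fun j => if j = m + 1 then a else c j, ?_⟩
    rw [Finset.sum_range_succ]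
    have : ∑ j ∈ Finset.range (m + 1), C (if j = m + 1 then a else c j) * Chebyshev.T ℝ (j : ℤ)
        = ∑ j ∈ Finset.range (m + 1), C (c j) * Chebyshev.T ℝ (j : ℤ) := by
      refine Finset.sum_congr rfl fun j hj => ?_
      rw [if_neg (by have := Finset.mem_range.mp hj; omega)]
    simp only [this, ← hc, if_true]
    ring

theorem aux_prod (s : ℂ) (δ : ℝ) (hδ : 0 ≤ δ) (h : ‖s‖ - s.re ≤ δ) (w : ℕ) :
    ∃ A d : ℕ, (A : ℝ) ≤ ‖s‖ + δ + 1 + 7 * d ∧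
      ∏ i ∈ Finset.range w, ‖s - (i : ℂ)‖ ≤ (A.descFactorial w : ℝ) / 2 ^ d := by
  by_cases hw : 2 * (w : ℝ) ≤ ‖s‖
  · have hn := norm_nonneg s
    refine ⟨⌈‖s‖ + δ⌉₊, 0, ?_, ?_⟩
    · have := (Nat.ceil_lt_add_one (a := ‖s‖ + δ) (by positivity)).le
      simpa using this
    · rw [Nat.descFactorial_eq_prod_range]
      push_cast
      rw [pow_zero, div_one]
      refine Finset.prod_le_prod (fun _ _ => norm_nonneg _) fun i hi => ?_
      have hi' : (i : ℝ) + 1 ≤ w := by exact_mod_cast Finset.mem_range.mp hi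
      have hc := Nat.le_ceil (‖s‖ + δ)
      have hle : i ≤ ⌈‖s‖ + δ⌉₊ := by
        have : (i : ℝ) ≤ (⌈‖s‖ + δ⌉₊ : ℝ) := by
          have : (0 : ℝ) ≤ w := by positivity
          linarith
        exact_mod_cast this
      rw [Nat.cast_sub hle]
      have hi0 : (0 : ℝ) ≤ i := by positivity
      refine le_trans (?_ : _ ≤ ‖s‖ + δ - i) (by linarith)
      refine abs_le_of_sq_le_sq' ?_ (by linarith) |>.2
      have e1 : ‖s - (i : ℂ)‖ ^ 2 = ‖s‖ ^ 2 - 2 * i * s.re + i ^ 2 := by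
        rw [← Complex.normSq_eq_norm_sq, ← Complex.normSq_eq_norm_sq, Complex.normSq_apply,
          Complex.normSq_apply]
        simp
        ring
      rw [e1]
      nlinarith [mul_le_mul_of_nonneg_left h hi0, mul_nonneg hδ (by linarith : 0 ≤ ‖s‖ - 2 * i)]
  · push Not at hw
    refine ⟨7 * w, w, ?_, ?_⟩
    · have := norm_nonneg s
      push_cast; linarith
    · rw [Nat.descFactorial_eq_prod_range, le_div_iff₀ (by positivity)]
      have : (2 : ℝ) ^ w = ∏ i ∈ Finset.range w, 2 := by simp
      rw [this, ← Finset.prod_mul_distrib]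
      push_cast
      refine Finset.prod_le_prod (fun _ _ => by positivity) fun i hi => ?_
      have hi1 := Finset.mem_range.mp hi
      have hi' : (i : ℝ) + 1 ≤ w := by exact_mod_cast hi1
      rw [Nat.cast_sub (by omega)]
      have : ‖s - (i : ℂ)‖ ≤ ‖s‖ + i := by simpa using norm_sub_le s (i : ℂ)
      push_cast
      linarith

theorem aux_vander (A B K w : ℕ) (hw : w ≤ K) :
    K.choose w * A.descFactorial w * B.descFactorial (K - w) ≤ (A + B).descFactorial K := by
  rw [Nat.descFactorial_eq_factorial_mul_choose, Nat.descFactorial_eq_factorial_mul_choose,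
    Nat.descFactorial_eq_factorial_mul_choose, Nat.add_choose_eq]
  have h1 : A.choose w * B.choose (K - w) ≤
      ∑ ij ∈ Finset.HasAntidiagonal.antidiagonal K, A.choose ij.1 * B.choose ij.2 :=
    Finset.single_le_sum (f := fun ij : ℕ × ℕ => A.choose ij.1 * B.choose ij.2)
      (fun _ _ => Nat.zero_le _) (a := (w, K - w)) (by rw [Finset.HasAntidiagonal.mem_antidiagonal]; dsimp only; omega)
  have h2 := Nat.choose_mul_factorial_mul_factorial hw
  calc _ = (K.choose w * w.factorial * (K - w).factorial) * (A.choose w * B.choose (K - w)) := by ring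
    _ ≤ _ := by rw [h2]; exact Nat.mul_le_mul_left _ h1

theorem aux_ratio (N n K : ℕ) (Y : ℝ) (hY : 0 ≤ Y) (hK : 1 ≤ K) (hn : 64 * K ≤ n)
    (hN : (N : ℝ) ≤ n + Y) :
    (N.descFactorial K : ℝ) ≤ n.descFactorial K * Real.exp (K * (Y / (n - K))) := by
  have hKn : (64 * K : ℝ) ≤ n := by exact_mod_cast hn
  have hK' : (1 : ℝ) ≤ K := by exact_mod_cast hK
  rw [Real.exp_nat_mul, Nat.descFactorial_eq_prod_range, Nat.descFactorial_eq_prod_range]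
  have : Real.exp (Y / (n - K)) ^ K = ∏ i ∈ Finset.range K, Real.exp (Y / (n - K)) := by simp
  rw [this]
  push_cast
  rw [← Finset.prod_mul_distrib]
  refine Finset.prod_le_prod (fun _ _ => by positivity) fun i hi => ?_
  have hi1 := Finset.mem_range.mp hi
  have hi' : (i : ℝ) + 1 ≤ K := by exact_mod_cast hi1
  rw [Nat.cast_sub (by omega : i ≤ n)]
  have hpos : (0 : ℝ) < n - K := by linarith
  have h1 : (n : ℝ) + Y - i ≤ (n - i) * Real.exp (Y / (n - K)) := by
    have h2 := Real.add_one_le_exp (Y / ((n : ℝ) - K))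
    have h3 : Y ≤ (n - i) * (Y / (n - K)) := by
      rw [mul_div_assoc', le_div_iff₀ hpos]
      nlinarith
    nlinarith [mul_le_mul_of_nonneg_left h2 (by linarith : (0:ℝ) ≤ n - i)]
  refine le_trans ?_ h1
  rcases le_total i N with h | h
  · rw [Nat.cast_sub h]; linarith
  · rw [Nat.sub_eq_zero_of_le h]; push_cast; linarith

theorem aux_bound (n K w : ℕ) (hK : 1 ≤ K) (hw : w ≤ K) (hn : 64 * K ≤ n) (s : ℂ) (ε : ℝ)
    (hε : 0 ≤ ε) (hs : ‖s‖ + ‖(n : ℂ) - s‖ ≤ n * (1 + ε)) :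
    (K.choose w : ℝ) * (∏ i ∈ Finset.range w, ‖s - (i : ℂ)‖) *
      (∏ i ∈ Finset.range (K - w), ‖(n : ℂ) - s - (i : ℂ)‖) / (n.descFactorial K : ℝ) ≤
      Real.exp (2 / 63 + 4 * K * ε) := by
  have hKn : (64 * K : ℝ) ≤ n := by exact_mod_cast hn
  have hK' : (1 : ℝ) ≤ K := by exact_mod_cast hK
  have hδ : (0 : ℝ) ≤ n * ε := by positivity
  have hre : ((n : ℂ) - s).re = n - s.re := by simp
  have r1 := Complex.re_le_norm s
  have r2 := Complex.re_le_norm ((n : ℂ) - s)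
  obtain ⟨A, d, hA, hA'⟩ := aux_prod s (n * ε) hδ (by linarith) w
  obtain ⟨B, e, hB, hB'⟩ := aux_prod ((n : ℂ) - s) (n * ε) hδ (by linarith) (K - w)
  have hpos : (0 : ℝ) < n.descFactorial K := by
    have : 0 < n.descFactorial K := Nat.descFactorial_pos.mpr (by omega)
    exact_mod_cast this
  rw [div_le_iff₀ hpos]
  set Y : ℝ := 3 * (n * ε) + 2 + 7 * (d + e) with hY
  have hY0 : 0 ≤ Y := by positivity
  have h3 := aux_ratio (A + B) n K Y hY0 hK hn (by push_cast; linarith)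
  have h4 : ((K.choose w * A.descFactorial w * B.descFactorial (K - w) : ℕ) : ℝ) ≤
    ((A + B).descFactorial K : ℕ) := Nat.cast_le.mpr (aux_vander A B K w hw)
  push_cast at h4
  have hnk : (0 : ℝ) < n - K := by linarith
  have h5 : (K : ℝ) * (Y / (n - K)) ≤ 2 / 63 + 4 * K * ε + (d + e) / 9 := by
    rw [mul_div_assoc', div_le_iff₀ hnk, hY]
    have : (0:ℝ) ≤ (d + e) := by positivity
    nlinarith [mul_nonneg this (by linarith : (0:ℝ) ≤ n - 64 * K),
      mul_nonneg (mul_nonneg (by linarith : (0:ℝ) ≤ K) hε) (by linarith : (0:ℝ) ≤ n - 64 * K), mul_nonneg (mul_nonneg (by linarith : (0:ℝ) ≤ K) hε) (by linarith : (0:ℝ) ≤ K)]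
  have h6 : Real.exp ((d + e) / 9) ≤ 2 ^ d * 2 ^ e := by
    rw [← pow_add]
    have : ((d : ℝ) + e) / 9 = ((d + e : ℕ) : ℝ) * (1 / 9) := by push_cast; ring
    rw [this, Real.exp_nat_mul]
    refine pow_le_pow_left₀ (Real.exp_pos _).le ?_ _
    have l2 := Real.log_two_gt_d9
    rw [← Real.le_log_iff_exp_le (by norm_num)]
    linarith
  calc _ ≤ (K.choose w : ℝ) * ((A.descFactorial w : ℝ) / 2 ^ d) * ((B.descFactorial (K - w) : ℝ) / 2 ^ e) := by
        have p1 : 0 ≤ ∏ i ∈ Finset.range w, ‖s - (i : ℂ)‖ := Finset.prod_nonneg fun _ _ => norm_nonneg _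
        gcongr
    _ = (K.choose w * A.descFactorial w * B.descFactorial (K - w)) / (2 ^ d * 2 ^ e) := by
        field_simp
    _ ≤ (n.descFactorial K * Real.exp (2 / 63 + 4 * K * ε + (d + e) / 9)) / (2 ^ d * 2 ^ e) := by
        refine div_le_div_of_nonneg_right ?_ (by positivity)
        refine (h4.trans h3).trans ?_
        gcongr
    _ ≤ _ := by
        rw [div_le_iff₀ (by positivity), Real.exp_add _ (((d:ℝ) + e) / 9)]
        have := mul_le_mul_of_nonneg_left h6 (by positivity : (0:ℝ) ≤ n.descFactorial K * Real.exp (2 / 63 + 4 * K * ε))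
        linarith

theorem aux_pval (n K w h : ℕ) (hw : w ≤ K) (hn : K ≤ n) (hh : h ≤ n) :
    (K.choose w : ℝ) * (h.descFactorial w) * ((n - h).descFactorial (K - w)) / (n.descFactorial K)
      = pval n K w h := by
  have hpos : (0 : ℝ) < n.descFactorial K := by
    have : 0 < n.descFactorial K := Nat.descFactorial_pos.mpr (by omega)
    exact_mod_cast this
  have hpos2 : (0 : ℝ) < n.choose h := by
    have : 0 < n.choose h := Nat.choose_pos hh
    exact_mod_cast this
  unfold pval
  split_ifs with hwh
  · rw [div_eq_div_iff hpos.ne' hpos2.ne']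
    have key : h.descFactorial w * (n - h).descFactorial (K - w) * n.choose h
        = (n - K).choose (h - w) * n.descFactorial K := by
      rcases Nat.lt_or_ge (n - h) (K - w) with h1 | h1
      · rw [Nat.descFactorial_of_lt h1, Nat.choose_eq_zero_of_lt (show n - K < h - w by omega)]
        simp
      · have f1 := Nat.factorial_mul_descFactorial hwh
        have f2 := Nat.factorial_mul_descFactorial h1
        have f3 := Nat.factorial_mul_descFactorial hn
        have f4 := Nat.choose_mul_factorial_mul_factorial hh
        have f5 := Nat.choose_mul_factorial_mul_factorial (n := n - K) (k := h - w) (by omega)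
        have e : n - K - (h - w) = n - h - (K - w) := by omega
        rw [e] at f5
        have q1 : 0 < (h - w).factorial * (n - h - (K - w)).factorial := by positivity
        refine Nat.eq_of_mul_eq_mul_left q1 ?_
        calc _ = ((h - w).factorial * h.descFactorial w) * ((n - h - (K - w)).factorial * (n - h).descFactorial (K - w)) * n.choose h := by ring
          _ = n.choose h * h.factorial * (n - h).factorial := by rw [f1, f2]; ring
          _ = n.factorial := f4
          _ = (n - K).factorial * n.descFactorial K := f3.symm
          _ = _ := by rw [← f5]; ring
    have key' : ((h.descFactorial w * (n - h).descFactorial (K - w) * n.choose h : ℕ) : ℝ)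
        = ((n - K).choose (h - w) * n.descFactorial K : ℕ) := by rw [key]
    push_cast at key'
    linear_combination (K.choose w : ℝ) * key'
  · rw [Nat.descFactorial_of_lt (by omega)]
    simp

open Polynomial in
/-- explicit form of `p` -/
noncomputable def auxP (n K w : ℕ) : ℝ[X] :=
  C ((K.choose w : ℝ) / n.descFactorial K) *
    (∏ i ∈ Finset.range w, (C ((n : ℝ) / 2) * (1 - X) - C (i : ℝ))) *
    (∏ i ∈ Finset.range (K - w), (C ((n : ℝ) / 2) * (1 + X) - C (i : ℝ)))

theorem aux_cast (h w : ℕ) : ∏ i ∈ Finset.range w, ((h : ℝ) - i) = h.descFactorial w := by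
  rw [← descPochhammer_eval_eq_descFactorial, descPochhammer_eval_eq_prod_range]

open Polynomial in
theorem auxP_deg (n K w : ℕ) (hw : w ≤ K) : (auxP n K w).natDegree ≤ K := by
  unfold auxP
  have g : ∀ m : ℕ, ∀ f : ℕ → ℝ[X], (∀ i, (f i).natDegree ≤ 1) →
      (∏ i ∈ Finset.range m, f i).natDegree ≤ m := by
    intro m f hf
    refine (natDegree_prod_le _ _).trans ?_
    refine (Finset.sum_le_sum fun i _ => hf i).trans (by simp)
  refine natDegree_mul_le.trans ?_
  have h1 := g w (fun i => (C ((n : ℝ) / 2) * (1 - X) - C (i : ℝ))) (fun i => by compute_degree)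
  have h2 := g (K - w) (fun i => (C ((n : ℝ) / 2) * (1 + X) - C (i : ℝ))) (fun i => by compute_degree)
  have h3 := natDegree_C_mul_le ((K.choose w : ℝ) / n.descFactorial K) (∏ i ∈ Finset.range w, (C ((n : ℝ) / 2) * (1 - X) - C (i : ℝ)))
  omega

open Polynomial in
theorem aux_eq (n K w : ℕ) (hK : 1 ≤ K) (hw : w ≤ K) (hn : 64 * K ≤ n)
    (p : Polynomial ℝ) (hdeg : p.natDegree ≤ K)
    (hp : ∀ h : ℕ, h ≤ n → p.eval (1 - 2 * (h : ℝ) / (n : ℝ)) = pval n K w h) :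
    p = auxP n K w := by
  have hn0 : (0 : ℝ) < n := by
    have : 0 < n := by omega
    exact_mod_cast this
  refine eq_of_natDegree_lt_card_of_eval_eq p _ (ι := Fin (n + 1))
    (f := fun h => 1 - 2 * ((h : ℕ) : ℝ) / n) ?_ ?_ ?_
  · intro a b hab
    simp only at hab
    have : 2 * ((a : ℕ) : ℝ) / n = 2 * ((b : ℕ) : ℝ) / n := by linarith
    rw [div_left_inj' hn0.ne'] at this
    have : ((a : ℕ) : ℝ) = ((b : ℕ) : ℝ) := by linarith
    exact Fin.ext (by exact_mod_cast this)
  · intro i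
    have hi : (i : ℕ) ≤ n := by omega
    rw [hp i hi, ← aux_pval n K w i hw (by omega) hi]
    simp only [auxP, eval_mul, eval_C, eval_prod, eval_sub, eval_add, eval_one, eval_X]
    rw [← aux_cast, ← aux_cast, Nat.cast_sub hi]
    have e1 : ∀ x : ℝ, (n : ℝ) / 2 * (1 - (1 - 2 * ((i : ℕ) : ℝ) / n)) - x = (i : ℕ) - x := by
      intro x; field_simp; ring
    have e2 : ∀ x : ℝ, (n : ℝ) / 2 * (1 + (1 - 2 * ((i : ℕ) : ℝ) / n)) - x = n - (i : ℕ) - x := by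
      intro x; field_simp; ring
    simp only [e1, e2]
    ring
  · have := auxP_deg n K w hw
    simp only [Fintype.card_fin]
    omega

open Polynomial in
theorem auxP_bound (n K w : ℕ) (hK : 1 ≤ K) (hw : w ≤ K) (hn : 64 * K ≤ n) (x : ℂ) (ε : ℝ)
    (hε : 0 ≤ ε) (hx : ‖(1 - x) / 2‖ + ‖(1 + x) / 2‖ ≤ 1 + ε) :
    ‖((auxP n K w).map (algebraMap ℝ ℂ)).eval x‖ ≤ Real.exp (2 / 63 + 4 * K * ε) := by
  have hb := aux_bound n K w hK hw hn (n * ((1 - x) / 2)) ε hε (by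
    have : (n : ℂ) - n * ((1 - x) / 2) = n * ((1 + x) / 2) := by ring
    rw [this, norm_mul, norm_mul, Complex.norm_natCast, ← mul_add]
    gcongr)
  refine le_trans (le_of_eq ?_) hb
  simp only [auxP, Polynomial.map_mul, Polynomial.map_prod, Polynomial.map_sub, Polynomial.map_add,
    map_C, map_X, Polynomial.map_one, eval_mul, eval_C, eval_prod, eval_sub, eval_add, eval_one,
    eval_X, norm_mul, norm_prod]
  have e1 : ∀ i : ℕ, (algebraMap ℝ ℂ) ((n : ℝ) / 2) * (1 - x) - (algebraMap ℝ ℂ) (i : ℝ)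
      = n * ((1 - x) / 2) - i := by intro i; simp; ring
  have e2 : ∀ i : ℕ, (algebraMap ℝ ℂ) ((n : ℝ) / 2) * (1 + x) - (algebraMap ℝ ℂ) (i : ℝ)
      = n - n * ((1 - x) / 2) - i := by intro i; simp; ring
  simp only [e1, e2]
  simp
  ring

theorem aux_joukowski (z : ℂ) (r : ℝ) (hr : 0 < r) (hz : ‖z‖ = r) :
    ‖(1 - (z + z⁻¹) / 2) / 2‖ + ‖(1 + (z + z⁻¹) / 2) / 2‖ = (r + r⁻¹) / 2 := by
  have hz0 : z ≠ 0 := by rintro rfl; simp at hz; linarith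
  have e1 : (1 - (z + z⁻¹) / 2) / 2 = -((z - 1) ^ 2 / (4 * z)) := by field_simp; ring
  have e2 : (1 + (z + z⁻¹) / 2) / 2 = (z + 1) ^ 2 / (4 * z) := by field_simp; ring
  have n1 : ‖z - 1‖ ^ 2 + ‖z + 1‖ ^ 2 = 2 * r ^ 2 + 2 := by
    rw [← hz]
    simp only [← Complex.normSq_eq_norm_sq, Complex.normSq_apply]
    simp
    ring
  rw [e1, e2, norm_neg, norm_div, norm_div, norm_pow, norm_pow, norm_mul, hz, ← add_div, n1]
  simp
  field_simp
  ring

open Polynomial in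
theorem aux_coeff (K : ℕ) (c : ℕ → ℝ) (r M : ℝ) (hr : 0 < r)
    (h : ∀ z : ℂ, ‖z‖ = r → ‖((∑ j ∈ Finset.range (K + 1),
      C (c j) * Chebyshev.T ℝ (j : ℤ)).map (algebraMap ℝ ℂ)).eval ((z + z⁻¹) / 2)‖ ≤ M)
    (j : ℕ) (hj : 1 ≤ j) (hjK : j ≤ K) : |c j| ≤ 2 * M / r ^ j := by
  set G : ℂ[X] := ∑ j ∈ Finset.range (K + 1), C ((c j : ℂ) / 2) * (X ^ (K + j) + X ^ (K - j)) with hG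
  have hb : ∀ z : ℂ, ‖z‖ = r → ‖G.eval z‖ ≤ M * r ^ K := by
    intro z hz
    have hz0 : z ≠ 0 := by rintro rfl; simp at hz; linarith
    have e : G.eval z = ((∑ j ∈ Finset.range (K + 1),
      C (c j) * Chebyshev.T ℝ (j : ℤ)).map (algebraMap ℝ ℂ)).eval ((z + z⁻¹) / 2) * z ^ K := by
      rw [hG, Polynomial.map_sum, eval_finsetSum, eval_finsetSum, Finset.sum_mul]
      refine Finset.sum_congr rfl fun i hi => ?_
      have hi' : i ≤ K := by have := Finset.mem_range.mp hi; omega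
      rw [Polynomial.map_mul, map_C, Chebyshev.map_T, eval_mul, eval_mul, eval_C, eval_C, aux_T z hz0]
      simp only [eval_add, eval_pow, eval_X, Complex.coe_algebraMap]
      have : z ^ K = z ^ (K - i) * z ^ i := by rw [← pow_add]; congr 1; omega
      rw [pow_add, this, inv_pow]
      field_simp
    rw [e, norm_mul, norm_pow, hz]
    exact mul_le_mul_of_nonneg_right (h z hz) (by positivity)
  have h1 := aux_cauchy G r (M * r ^ K) hr hb (K + j)
  have h2 : G.coeff (K + j) = (c j : ℂ) / 2 := by
    rw [hG, finsetSum_coeff, Finset.sum_eq_single j]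
    · rw [coeff_C_mul, coeff_add, coeff_X_pow, coeff_X_pow, if_pos rfl, if_neg (by omega)]
      simp
    · intro i _ hi
      rw [coeff_C_mul, coeff_add, coeff_X_pow, coeff_X_pow, if_neg (by omega), if_neg (by omega)]
      simp
    · intro hh
      exact absurd (Finset.mem_range.mpr (by omega)) hh
  rw [h2, pow_add] at h1
  simp only [norm_div, Complex.norm_real, Real.norm_eq_abs, Complex.norm_ofNat] at h1
  have h3 : M * r ^ K / (r ^ K * r ^ j) = M / r ^ j := by field_simp
  rw [h3] at h1
  rw [mul_div_assoc]
  linarith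

theorem stmt10 (n K w : ℕ) (hK : 1 ≤ K) (hw : w ≤ K) (hn : 64 * K ≤ n)
    (p : Polynomial ℝ) (hdeg : p.natDegree ≤ K)
    (hp : ∀ h : ℕ, h ≤ n → p.eval (1 - 2 * (h : ℝ) / (n : ℝ)) = pval n K w h) :
    ∀ k : ℕ, 1 ≤ k →
      ∃ q : Polynomial ℝ, q.natDegree ≤ k ∧
        ∀ t : ℝ, -1 ≤ t → t ≤ 1 →
          |p.eval t - q.eval t| ≤
            4 * Real.sqrt (K : ℝ) * Real.exp (-(k : ℝ) ^ 2 / (1156 * (K : ℝ))) := by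
  intro k hk
  have hK' : (1 : ℝ) ≤ K := by exact_mod_cast hK
  have hk' : (1 : ℝ) ≤ k := by exact_mod_cast hk
  rcases Nat.lt_or_ge k K with hkK | hkK
  swap
  · exact ⟨p, by omega, fun t _ _ => by rw [sub_self, abs_zero]; positivity⟩
  have hpe := aux_eq n K w hK hw hn p hdeg hp
  have hbd := auxP_bound n K w hK hw hn
  rw [← hpe] at hbd
  set R := 4 * Real.sqrt (K : ℝ) * Real.exp (-(k : ℝ) ^ 2 / (1156 * (K : ℝ))) with hR
  rcases le_total (Real.exp (2 / 63)) R with htriv | hnon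
  · refine ⟨0, by simp, fun t ht1 ht2 => ?_⟩
    have h1 := hbd (t : ℂ) 0 le_rfl (by
      have e1 : (1 - (t : ℂ)) / 2 = (((1 - t) / 2 : ℝ) : ℂ) := by push_cast; ring
      have e2 : (1 + (t : ℂ)) / 2 = (((1 + t) / 2 : ℝ) : ℂ) := by push_cast; ring
      rw [e1, e2, Complex.norm_of_nonneg (by linarith), Complex.norm_of_nonneg (by linarith)]
      linarith)
    have e3 : ((p.map (algebraMap ℝ ℂ)).eval (t : ℂ)) = ((p.eval t : ℝ) : ℂ) := by
      rw [← Complex.coe_algebraMap, Polynomial.eval_map_apply]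
    rw [e3, Complex.norm_real, Real.norm_eq_abs, mul_zero, add_zero] at h1
    simpa using h1.trans htriv
  obtain ⟨c, hc⟩ := aux_expand K p hdeg
  set L : ℝ := k / (8 * K) with hL
  have hL0 : 0 < L := by positivity
  have hkK' : (k : ℝ) ≤ K := by exact_mod_cast hkK.le
  have hL1 : L ≤ 1 / 8 := by
    rw [hL, div_le_iff₀ (by positivity)]; linarith
  have hcosh : (Real.exp L + (Real.exp L)⁻¹) / 2 ≤ 1 + L ^ 2 := by
    rw [← Real.exp_neg, ← Real.cosh_eq]
    refine (Real.cosh_le_exp_half_sq L).trans ?_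
    have := Real.abs_exp_sub_one_sub_id_le (x := L ^ 2 / 2) (by rw [abs_of_nonneg (by positivity)]; nlinarith)
    have := (abs_le.mp this).2
    have hs : L ^ 2 ≤ 1 := by nlinarith
    nlinarith [mul_le_mul_of_nonneg_left hs (sq_nonneg L)]
  have hcj : ∀ j, 1 ≤ j → j ≤ K → |c j| ≤ 2 * Real.exp (2 / 63 + 4 * K * L ^ 2) / Real.exp L ^ j := by
    refine aux_coeff K c (Real.exp L) _ (Real.exp_pos _) (fun z hz => ?_)
    rw [← hc]
    refine hbd _ (L ^ 2) (by positivity) ?_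
    rw [aux_joukowski z _ (Real.exp_pos _) hz]
    exact hcosh
  refine ⟨∑ j ∈ Finset.range (k + 1), Polynomial.C (c j) * Polynomial.Chebyshev.T ℝ (j : ℤ), ?_, ?_⟩
  · refine Polynomial.natDegree_sum_le_of_forall_le _ _ fun j hj => ?_
    refine (Polynomial.natDegree_C_mul_le _ _).trans ?_
    rw [Polynomial.Chebyshev.natDegree_T]
    have := Finset.mem_range.mp hj
    simp; omega
  intro t ht1 ht2
  have hT : ∀ j : ℕ, |(Polynomial.Chebyshev.T ℝ (j : ℤ)).eval t| ≤ 1 := by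
    intro j
    rw [← Real.cos_arccos ht1 ht2, Polynomial.Chebyshev.T_real_cos]
    exact Real.abs_cos_le_one _
  have hdiff : p.eval t - (∑ j ∈ Finset.range (k + 1),
      Polynomial.C (c j) * Polynomial.Chebyshev.T ℝ (j : ℤ)).eval t
      = ∑ j ∈ Finset.Ico (k + 1) (K + 1), c j * (Polynomial.Chebyshev.T ℝ (j : ℤ)).eval t := by
    conv_lhs => rw [hc]
    rw [Polynomial.eval_finsetSum, Polynomial.eval_finsetSum,
      Finset.sum_Ico_eq_sub _ (by omega : k + 1 ≤ K + 1)]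
    simp only [Polynomial.eval_mul, Polynomial.eval_C]
  rw [hdiff]
  set x : ℝ := (k : ℝ) ^ 2 / K with hx
  have hx0 : 0 ≤ x := by positivity
  have hterm : ∀ j ∈ Finset.Ico (k + 1) (K + 1),
      |c j * (Polynomial.Chebyshev.T ℝ (j : ℤ)).eval t| ≤ 2 * Real.exp (2 / 63) * Real.exp (- x / 16) := by
    intro j hj
    have hj' := Finset.mem_Ico.mp hj
    rw [abs_mul]
    refine (mul_le_of_le_one_right (abs_nonneg _) (hT j)).trans ?_
    refine (hcj j (by omega) (by omega)).trans ?_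
    rw [← Real.exp_nat_mul, mul_div_assoc, ← Real.exp_sub, mul_assoc 2 (Real.exp _), ← Real.exp_add]
    refine mul_le_mul_of_nonneg_left (Real.exp_le_exp.mpr ?_) (by norm_num)
    have hkj : (k : ℝ) ≤ j := by exact_mod_cast (by omega : k ≤ j)
    have e1 : 4 * K * L ^ 2 = x / 16 := by rw [hL, hx]; field_simp; norm_num
    have e2 : (k : ℝ) * L = x / 8 := by rw [hL, hx]; field_simp
    nlinarith [mul_le_mul_of_nonneg_right hkj hL0.le]
  have hE : Real.exp (2 / 63) ≤ 2 := by
    have l2 := Real.log_two_gt_d9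
    rw [← Real.le_log_iff_exp_le (by norm_num)]
    linarith
  have hRx : R = 4 * Real.sqrt K * Real.exp (-x / 1156) := by
    rw [hR, hx]; congr 2; field_simp
  have hsum : |∑ j ∈ Finset.Ico (k + 1) (K + 1), c j * (Polynomial.Chebyshev.T ℝ (j : ℤ)).eval t|
      ≤ K * (2 * Real.exp (2 / 63) * Real.exp (- x / 16)) := by
    refine (Finset.abs_sum_le_sum_abs _ _).trans ?_
    refine (Finset.sum_le_card_nsmul _ _ _ hterm).trans ?_
    rw [nsmul_eq_mul, Nat.card_Ico]
    refine mul_le_mul_of_nonneg_right ?_ (by positivity)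
    exact_mod_cast (by omega : K + 1 - (k + 1) ≤ K)
  refine hsum.trans ?_
  -- √K ≤ exp (x/1156)
  have hsq : Real.sqrt K ≤ Real.exp (x / 1156) := by
    have h1 : 4 * Real.sqrt K * Real.exp (-x / 1156) ≤ 2 := by rw [← hRx]; exact hnon.trans hE
    rw [neg_div, Real.exp_neg, ← div_eq_mul_inv, div_le_iff₀ (Real.exp_pos _)] at h1
    linarith [Real.exp_pos (x / 1156)]
  rw [hRx]
  have hKs : (K : ℝ) = Real.sqrt K * Real.sqrt K := (Real.mul_self_sqrt (by positivity)).symm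
  have h7 : Real.exp (x / 1156) * Real.exp (-x / 16) ≤ Real.exp (-x / 1156) := by
    rw [← Real.exp_add]
    exact Real.exp_le_exp.mpr (by linarith)
  calc (K : ℝ) * (2 * Real.exp (2 / 63) * Real.exp (- x / 16))
      = Real.sqrt K * (2 * Real.exp (2 / 63)) * (Real.sqrt K * Real.exp (- x / 16)) := by
        conv_lhs => rw [hKs]
        ring
    _ ≤ Real.sqrt K * (2 * 2) * (Real.exp (x / 1156) * Real.exp (- x / 16)) := by gcongr
    _ ≤ Real.sqrt K * (2 * 2) * Real.exp (-x / 1156) := by gcongr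
    _ = _ := by ring
end

section
/- Let n, K, w be integers with 1 ≤ K, 0 ≤ w ≤ K, and n ≥ 64K, and let p_w be the unique univariate real polynomial of degree at most K with p_w(1 − 2h/n) = C(K,w)·C(n−K,h−w)/C(n,h) for every integer 0 ≤ h ≤ n. Then |p_w(t)| ≤ 2 for all t ∈ [−1, 1]. -/
open Finset in
noncomputable def GG (n a b : ℕ) (x : ℝ) : ℝ :=
  ((a+b).choose a : ℝ) * (∏ i ∈ range a, (x - i)) * (∏ j ∈ range b, ((n:ℝ) - x - j))
    / (∏ i ∈ range (a+b), ((n:ℝ) - i))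

open Finset in
theorem prod_desc (m k : ℕ) : (∏ i ∈ range k, ((m:ℝ) - i)) = (m.descFactorial k : ℝ) := by
  induction k with
  | zero => simp
  | succ k ih =>
    rw [prod_range_succ, ih, Nat.descFactorial_succ]
    rcases le_or_gt k m with h | h
    · push_cast [Nat.cast_sub h]; ring
    · rw [Nat.descFactorial_of_lt h]; simp

open Finset in
theorem GG_nat (n a b h : ℕ) (hn : a + b ≤ n) (hh : h ≤ n) :
    GG n a b h = pval n (a+b) a h := by
  unfold GG pval
  have e : (∏ j ∈ range b, ((n:ℝ) - h - j)) = ((n-h).descFactorial b : ℝ) := by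
    rw [← prod_desc, Nat.cast_sub hh]
  rw [e, prod_desc, prod_desc]
  have hD : (n.descFactorial (a+b) : ℝ) ≠ 0 := by
    have := Nat.descFactorial_eq_zero_iff_lt (n := n) (k := a+b)
    exact_mod_cast fun h0 => absurd (this.1 h0) (by omega)
  have hC : (n.choose h : ℝ) ≠ 0 := by exact_mod_cast (Nat.choose_pos hh).ne'
  split_ifs with hw
  · rw [div_eq_div_iff hD hC]
    rcases le_or_gt b (n-h) with hb | hb
    · obtain ⟨u, rfl⟩ := Nat.exists_eq_add_of_le hw
      obtain ⟨v, hv⟩ := Nat.exists_eq_add_of_le hb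
      have hn' : n = a + b + (u + v) := by omega
      have h1 := Nat.factorial_mul_descFactorial (n := a+u) (k := a) (by omega)
      have h2 := Nat.factorial_mul_descFactorial (n := n-(a+u)) (k := b) hb
      have h3 := Nat.factorial_mul_descFactorial (n := n) (k := a+b) hn
      have h4 := Nat.choose_mul_factorial_mul_factorial (n := n) (k := a+u) hh
      have h5 := Nat.choose_mul_factorial_mul_factorial (n := n-(a+b)) (k := u) (by omega)
      have e1 : a + u - a = u := by omega
      have e2 : n - (a+u) - b = v := by omega
      have e3 : n - (a+b) - u = v := by omega
      rw [e1] at h1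
      rw [e2] at h2
      rw [e3] at h5
      rw [e1]
      have p1 := Nat.factorial_ne_zero u
      have p2 := Nat.factorial_ne_zero v
      have key : (a+u).descFactorial a * (n-(a+u)).descFactorial b * n.choose (a+u)
          = (n-(a+b)).choose u * n.descFactorial (a+b) := by
        apply Nat.eq_of_mul_eq_mul_left (Nat.pos_of_ne_zero (mul_ne_zero p1 p2))
        calc _ = n.choose (a+u) * (u.factorial * (a+u).descFactorial a) *
                (v.factorial * (n-(a+u)).descFactorial b) := by ring
          _ = n.factorial := by rw [h1, h2, h4]
          _ = ((n-(a+b)).choose u * u.factorial * v.factorial) * n.descFactorial (a+b) := by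
                rw [h5, h3]
          _ = _ := by ring
      have key' : ((a+u).descFactorial a : ℝ) * (n-(a+u)).descFactorial b * n.choose (a+u)
          = (n-(a+b)).choose u * n.descFactorial (a+b) := by exact_mod_cast key
      linear_combination ((a+b).choose a : ℝ) * key'
    · rw [Nat.descFactorial_of_lt hb, Nat.choose_eq_zero_of_lt (n := n-(a+b)) (by omega)]
      simp
  · rw [Nat.descFactorial_of_lt (by omega : h < a)]
    simp

theorem pval_le (n K w h : ℕ) (hK : K ≤ n) (hw : w ≤ K) (hh : h ≤ n) : pval n K w h ≤ 1 := by
  unfold pval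
  split_ifs with hwh
  · apply div_le_one_of_le₀ _ (by positivity)
    have := Nat.add_choose_eq K (n-K) h
    rw [show K + (n-K) = n by omega] at this
    have h2 : K.choose w * (n-K).choose (h-w) ≤ n.choose h := by
      rw [this]
      exact Finset.single_le_sum (f := fun ij : ℕ × ℕ => K.choose ij.1 * (n-K).choose ij.2)
        (fun _ _ => Nat.zero_le _)
        (a := (w, h-w)) (by simp [Finset.mem_antidiagonal]; omega)
    exact_mod_cast h2
  · norm_num

open Finset in
theorem prod_abs_le (w : ℕ) : ∀ x : ℝ, 0 ≤ x → x ≤ w →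
    ∏ i ∈ range w, |x - i| ≤ (w.factorial : ℝ) := by
  induction w with
  | zero => simp
  | succ w ih =>
    intro x h0 h1
    rcases le_or_gt 1 x with hx | hx
    · rw [prod_range_succ', Nat.factorial_succ]
      push_cast at h1 ⊢
      have := ih (x-1) (by linarith) (by linarith)
      have e : ∏ i ∈ range w, |x - ((i:ℝ)+1)| = ∏ i ∈ range w, |x - 1 - i| := by
        apply prod_congr rfl; intros; congr 1; ring
      rw [e, mul_comm, sub_zero, abs_of_nonneg h0]
      exact mul_le_mul h1 this (prod_nonneg fun _ _ => abs_nonneg _) (by positivity)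
    · rw [← prod_range_add_one_eq_factorial]
      push_cast
      apply prod_le_prod (fun _ _ => abs_nonneg _)
      intro i _
      have : (0:ℝ) ≤ i := by positivity
      rw [abs_le]; constructor <;> linarith

open Finset in
theorem den_pos (n k : ℕ) (h : k ≤ n) : 0 < ∏ i ∈ range k, ((n:ℝ) - i) := by
  apply prod_pos
  intro i hi
  have : i < k := mem_range.1 hi
  have : (i:ℝ) < n := by exact_mod_cast (by omega : i < n)
  linarith

open Finset in
theorem GG_left (n a b : ℕ) (hn : 2 * (a + b) ≤ n) (x : ℝ) (h0 : 0 ≤ x) (h1 : x ≤ a) :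
    |GG n a b x| ≤ 1 := by
  unfold GG
  have hD := den_pos n (a+b) (by omega)
  have hn' : 2 * ((a:ℝ)+b) ≤ n := by exact_mod_cast hn
  rw [abs_div, abs_of_pos hD]
  apply div_le_one_of_le₀ _ hD.le
  rw [abs_mul, abs_mul, abs_prod, abs_prod, Nat.abs_cast, add_comm a b, prod_range_add, add_comm b a]
  have A := prod_abs_le a x h0 h1
  have B : ∏ j ∈ range b, |(n:ℝ) - x - j| ≤ ∏ j ∈ range b, ((n:ℝ) - j) := by
    apply prod_le_prod (fun _ _ => abs_nonneg _)
    intro j hj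
    have : (j:ℝ) < b := by exact_mod_cast mem_range.1 hj
    rw [abs_le]; constructor <;> linarith
  have C : ((a+b).choose a : ℝ) * a.factorial ≤ ∏ i ∈ range a, ((n:ℝ) - ((b+i : ℕ):ℝ)) := by
    have : ((a+b).choose a : ℝ) * a.factorial = ((a+b).descFactorial a : ℝ) := by
      rw [Nat.descFactorial_eq_factorial_mul_choose]; push_cast; ring
    rw [this, ← prod_desc]
    apply prod_le_prod
    · intro i hi
      have : (i:ℝ) < a := by exact_mod_cast mem_range.1 hi
      push_cast
      have : (0:ℝ) ≤ b := by positivity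
      linarith
    · intro i hi
      push_cast
      have : (0:ℝ) ≤ a := by positivity
      linarith
  have P0 : 0 ≤ ∏ j ∈ range b, |(n:ℝ) - x - j| := prod_nonneg fun _ _ => abs_nonneg _
  calc _ ≤ ((a+b).choose a : ℝ) * a.factorial * ∏ j ∈ range b, |(n:ℝ) - x - j| := by gcongr
    _ ≤ (∏ i ∈ range a, ((n:ℝ) - ((b+i : ℕ):ℝ))) * ∏ j ∈ range b, ((n:ℝ) - j) :=
        mul_le_mul C B P0 (le_trans (by positivity) C)
    _ = _ := by ring

open Finset in
theorem GG_symm (n a b : ℕ) (x : ℝ) : GG n a b x = GG n b a (n - x) := by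
  unfold GG
  rw [add_comm b a, ← Nat.choose_symm_add]
  simp only [sub_sub_cancel]
  ring

open Finset in
theorem prod_exp (k : ℕ) (a d : ℝ) (h : ∀ i ∈ range k, 0 < a - i) 
    (h' : ∀ i ∈ range k, 0 ≤ a + d - i) :
    ∏ i ∈ range k, (a + d - i) ≤ (∏ i ∈ range k, (a - i)) *
      Real.exp (d * ∑ i ∈ range k, 1 / (a - i)) := by
  rw [mul_sum, Real.exp_sum, ← prod_mul_distrib]
  apply prod_le_prod h'
  intro i hi
  have h1 := h i hi
  calc a + d - i = (a - i) * (d * (1/(a-i)) + 1) := by field_simp; ring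
    _ ≤ _ := mul_le_mul_of_nonneg_left (Real.add_one_le_exp _) h1.le

open Finset in
theorem sum_diff (k : ℕ) (a : ℝ) (h : (k:ℝ) ≤ a) :
    ∑ i ∈ range k, 1 / (a - i) - ∑ i ∈ range k, 1 / (a + 1 - i) ≤ 1 := by
  have e : ∀ m : ℕ, ∑ i ∈ range m, 1 / (a - i) - ∑ i ∈ range m, 1 / (a + 1 - i)
      = 1 / (a + 1 - m) - 1 / (a + 1) := by
    intro m
    induction m with
    | zero => simp
    | succ m ih =>
      rw [sum_range_succ, sum_range_succ]
      push_cast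
      rw [show a + 1 - ((m:ℝ)+1) = a - m by ring]
      linarith
  rw [e k]
  have h0 : (0:ℝ) ≤ k := by positivity
  have : 1 / (a + 1 - k) ≤ 1 := by
    rw [div_le_one (by linarith)]; linarith
  have : 0 ≤ 1 / (a+1) := by apply div_nonneg <;> linarith
  linarith

open Finset in
theorem GG_step (n a b h : ℕ) (d : ℝ) (hn : a + b ≤ n) (hh : h ≤ n)
    (h1 : a ≤ h) (h2 : b ≤ n - h) (h3 : (a:ℝ) ≤ h + d) (h4 : (b:ℝ) ≤ n - h - d) :
    0 ≤ GG n a b (h + d) ∧ GG n a b (h + d) ≤ Real.exp (d * (∑ i ∈ range a, 1 / ((h:ℝ) - i)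
      - ∑ i ∈ range b, 1 / ((n:ℝ) - h - i))) := by
  have hD := den_pos n (a+b) hn
  have hG : GG n a b h ≤ 1 := by
    rw [GG_nat n a b h hn hh]; exact pval_le _ _ _ _ hn (by omega) hh
  have h1' : (a:ℝ) ≤ h := by exact_mod_cast h1
  have h2' : (b:ℝ) ≤ n - h := by rw [← Nat.cast_sub hh]; exact_mod_cast h2
  have p1 : ∀ i ∈ range a, (i:ℝ) < a := fun i hi => by exact_mod_cast mem_range.1 hi
  have p2 : ∀ i ∈ range b, (i:ℝ) < b := fun i hi => by exact_mod_cast mem_range.1 hi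
  have A := prod_exp a h d (fun i hi => by linarith [p1 i hi]) (fun i hi => by linarith [p1 i hi])
  have B := prod_exp b (n-h) (-d) (fun i hi => by linarith [p2 i hi])
    (fun i hi => by linarith [p2 i hi])
  have A0 : 0 ≤ ∏ i ∈ range a, ((h:ℝ) + d - i) :=
    prod_nonneg (fun i hi => by linarith [p1 i hi])
  have B0 : 0 ≤ ∏ i ∈ range b, ((n:ℝ) - h + -d - i) :=
    prod_nonneg (fun i hi => by linarith [p2 i hi])
  have AB := mul_le_mul A B B0 (le_trans A0 A)
  have e : ∏ j ∈ range b, ((n:ℝ) - (h+d) - j) = ∏ i ∈ range b, ((n:ℝ) - h + -d - i) := by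
    apply prod_congr rfl; intros; ring
  constructor
  · unfold GG
    rw [e]
    positivity
  · have C : GG n a b (h+d) ≤ GG n a b h * Real.exp (d * (∑ i ∈ range a, 1 / ((h:ℝ) - i)
      - ∑ i ∈ range b, 1 / ((n:ℝ) - h - i))) := by
      unfold GG
      rw [e, div_mul_eq_mul_div]
      apply div_le_div_of_nonneg_right _ hD.le
      have ee : ∀ u v : ℝ, Real.exp (d * (u - v)) = Real.exp (d * u) * Real.exp (-d * v) := by
        intro u v; rw [← Real.exp_add]; congr 1; ring
      rw [ee]
      have := mul_le_mul_of_nonneg_left AB (Nat.cast_nonneg (α := ℝ) ((a+b).choose a))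
      linarith
    refine C.trans ?_
    exact mul_le_of_le_one_left (Real.exp_pos _).le hG

theorem exp_half : Real.exp (1/2) ≤ 2 := by
  have h := Real.exp_one_lt_d9
  have e : Real.exp (1/2) * Real.exp (1/2) = Real.exp 1 := by rw [← Real.exp_add]; norm_num
  have := Real.exp_pos (1/2)
  nlinarith

theorem min_half (s α β : ℝ) (h0 : 0 ≤ s) (h1 : s ≤ 1) (h : α + β ≤ 2) :
    s * α ≤ 1/2 ∨ (1-s) * β ≤ 1/2 := by
  by_contra! hc
  obtain ⟨c1, c2⟩ := hc
  have hα : 0 < α := by by_contra! h'; nlinarith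
  have hβ : 0 < β := by by_contra! h'; nlinarith
  have h3 : (1/2) * (1/2) < (s*α) * ((1-s)*β) := by
    apply mul_lt_mul'' c1 c2 <;> norm_num
  have h4 : α * β ≤ 1 := by nlinarith [sq_nonneg (α-β)]
  have h5 : s * (1-s) ≤ 1/4 := by nlinarith [sq_nonneg (s-1/2)]
  have h6 : 0 ≤ s * (1-s) := mul_nonneg h0 (by linarith)
  have h7 : (s*(1-s)) * (α*β) ≤ 1/4 * 1 := mul_le_mul h5 h4 (by positivity) (by norm_num)
  nlinarith

open Finset in
theorem GG_bound (n a b : ℕ) (hn : 2 * (a + b) ≤ n) (x : ℝ) (h0 : 0 ≤ x) (h1 : x ≤ n) :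
    |GG n a b x| ≤ 2 := by
  rcases le_or_gt x a with ha | ha
  · linarith [GG_left n a b hn x h0 ha]
  rcases le_or_gt (n - x) b with hb | hb
  · rw [GG_symm]
    linarith [GG_left n b a (by omega) (n-x) (by linarith) hb]
  set h := ⌊x⌋₊ with hh
  have f1 : (h:ℝ) ≤ x := Nat.floor_le h0
  have f2 : x < h + 1 := Nat.lt_floor_add_one x
  have g1 : a ≤ h := Nat.le_floor ha.le
  have g2 : h + b < n := by
    have : (h:ℝ) + b < n := by linarith
    exact_mod_cast this
  have g1' : (a:ℝ) ≤ h := by exact_mod_cast g1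
  have g2' : (h:ℝ) + 1 + b ≤ n := by exact_mod_cast (by omega : h + 1 + b ≤ n)
  obtain ⟨q0, q1⟩ := GG_step n a b h (x - h) (by omega) (by omega) g1 (by omega)
    (by linarith) (by linarith)
  obtain ⟨_, q2⟩ := GG_step n a b (h+1) (x - (h+1)) (by omega) (by omega) (by omega) (by omega)
    (by push_cast; linarith) (by push_cast; linarith)
  have d1 := sum_diff a h g1'
  have d2 := sum_diff b (n-h-1) (by linarith)
  push_cast at q2
  rw [show (n:ℝ) - h - 1 + 1 = n - h by ring] at d2
  rw [show (n:ℝ) - (h + 1) = n - h - 1 by ring] at q2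
  rw [add_sub_cancel] at q0 q1 q2
  rw [abs_of_nonneg q0]
  rcases min_half (x-h) (∑ i ∈ range a, 1 / ((h:ℝ) - i) - ∑ i ∈ range b, 1 / ((n:ℝ) - h - i))
    (∑ i ∈ range b, 1 / ((n:ℝ) - h - 1 - i) - ∑ i ∈ range a, 1 / ((h:ℝ) + 1 - i))
    (by linarith) (by linarith) (by linarith) with c | c
  · exact q1.trans ((Real.exp_le_exp.2 c).trans exp_half)
  · refine q2.trans ((Real.exp_le_exp.2 ?_).trans exp_half)
    linarith

open Finset Polynomial in
theorem GG_poly (n a b : ℕ) : ∃ q : ℝ[X], q.natDegree ≤ a + b ∧ ∀ x, q.eval x = GG n a b x := by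
  refine ⟨C (((a+b).choose a : ℝ) / (∏ i ∈ range (a+b), ((n:ℝ) - i))) *
    ((∏ i ∈ range a, (X - C (i:ℝ))) * (∏ j ∈ range b, (C ((n:ℝ) - j) - X))), ?_, ?_⟩
  · refine (natDegree_C_mul_le _ _).trans (natDegree_mul_le.trans (add_le_add ?_ ?_))
    · refine (natDegree_prod_le _ _).trans ?_
      refine (sum_le_card_nsmul _ _ 1 ?_).trans (by simp)
      intro i _
      exact natDegree_X_sub_C_le _
    · refine (natDegree_prod_le _ _).trans ?_
      refine (sum_le_card_nsmul _ _ 1 ?_).trans (by simp)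
      intro i _
      compute_degree
  · intro x
    simp only [eval_mul, eval_C, eval_prod, eval_sub, eval_X, GG]
    have : ∏ j ∈ range b, ((n:ℝ) - j - x) = ∏ j ∈ range b, ((n:ℝ) - x - j) := by
      apply prod_congr rfl; intros; ring
    rw [this]; ring

theorem stmt11 (n K w : ℕ) (hK : 1 ≤ K) (hw : w ≤ K) (hn : 64 * K ≤ n)
    (p : Polynomial ℝ) (hdeg : p.natDegree ≤ K)
    (hp : ∀ h : ℕ, h ≤ n → p.eval (1 - 2 * (h : ℝ) / (n : ℝ)) = pval n K w h) :
    ∀ t : ℝ, -1 ≤ t → t ≤ 1 → |p.eval t| ≤ 2 := by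
  intro t ht1 ht2
  obtain ⟨b, rfl⟩ := Nat.exists_eq_add_of_le hw
  obtain ⟨q, hq1, hq2⟩ := GG_poly n w b
  have hn0 : (0:ℝ) < n := by exact_mod_cast (by omega : 0 < n)
  have E : p.comp (Polynomial.C 1 - Polynomial.C (2/(n:ℝ)) * Polynomial.X) = q := by
    apply Polynomial.eq_of_natDegree_lt_card_of_eval_eq (ι := Fin (n+1)) _ _
      (f := fun i => ((i:ℕ):ℝ))
    · intro i j hij
      apply Fin.ext
      simpa using hij
    · intro i
      rw [hq2, GG_nat n w b i (by omega) (by omega), ← hp i (by omega)]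
      simp only [Polynomial.eval_comp, Polynomial.eval_sub, Polynomial.eval_mul,
        Polynomial.eval_C, Polynomial.eval_X]
      congr 1; ring
    · rw [Fintype.card_fin]
      refine lt_of_le_of_lt (max_le ?_ hq1) (by omega : w + b < n + 1)
      refine Polynomial.natDegree_comp_le.trans ?_
      have : (Polynomial.C 1 - Polynomial.C (2/(n:ℝ)) * Polynomial.X).natDegree ≤ 1 := by
        compute_degree
      nlinarith
  have e : p.eval t = GG n w b ((1-t)*n/2) := by
    rw [← hq2, ← E]
    simp only [Polynomial.eval_comp, Polynomial.eval_sub, Polynomial.eval_mul,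
        Polynomial.eval_C, Polynomial.eval_X]
    congr 1; field_simp; ring
  rw [e]
  apply GG_bound n w b (by omega)
  · have : 0 ≤ (1-t)*n := mul_nonneg (by linarith) hn0.le
    linarith
  · nlinarith
end

section
/- Let K ≥ 1 and let z_1, …, z_K be real numbers. Define the univariate real polynomial g(s) = ∏_{j=1}^{K} (s² − 2·z_j·s + 1)/2, of degree 2K, and let a_i denote the coefficient of s^i in g for 0 ≤ i ≤ 2K. Then for all real t, ∏_{j=1}^{K} (t − z_j) = Σ_{i=0}^{2K} a_i · T_{|i − K|}(t), where T_m denotes the degree-m Chebyshev polynomial of the first kind. In particular, the d-th Chebyshev coefficient of ∏_{j=1}^{K}(t − z_j) (in the expansion Σ_{d=−K}^{K} c_d T_d with c_{−d} = c_d) is the (K+d)-th regular coefficient of g. -/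
open Polynomial

noncomputable def chebL (t : ℝ) (m : ℤ) : ℝ[X] →ₗ[ℝ] ℝ :=
  Polynomial.lsum (fun i : ℕ => ((Polynomial.Chebyshev.T ℝ ((i : ℤ) - m)).eval t) • LinearMap.id)

lemma chebL_monomial (t : ℝ) (m : ℤ) (i : ℕ) (a : ℝ) :
    chebL t m (monomial i a) = (Polynomial.Chebyshev.T ℝ ((i : ℤ) - m)).eval t * a := by
  simp [chebL, Polynomial.lsum_apply, Polynomial.sum_monomial_index]

lemma chebL_step (t : ℝ) (m : ℤ) (z : ℝ) (p : ℝ[X]) :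
    chebL t (m + 1) (Polynomial.C (1 / 2 : ℝ) * (X ^ 2 - Polynomial.C (2 * z) * X + 1) * p)
      = (t - z) * chebL t m p := by
  induction p using Polynomial.induction_on' with
  | add p q hp hq => rw [mul_add, map_add, hp, hq, map_add, mul_add]
  | monomial i a =>
    have h : Polynomial.C (1 / 2 : ℝ) * (X ^ 2 - Polynomial.C (2 * z) * X + 1) * monomial i a
        = monomial (i + 2) (a / 2) - monomial (i + 1) (z * a) + monomial i (a / 2) := by
      simp only [← Polynomial.C_mul_X_pow_eq_monomial]
      have h2 : (Polynomial.C (a / 2) : ℝ[X]) = Polynomial.C (1 / 2) * Polynomial.C a := by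
        rw [← Polynomial.C_mul]; congr 1; ring
      have h3 : (Polynomial.C (1 / 2) : ℝ[X]) * Polynomial.C (2 * z) = Polynomial.C z := by
        rw [← Polynomial.C_mul]; congr 1; ring
      rw [h2, Polynomial.C_mul (a := z), ← h3]
      ring
    rw [h, map_add, map_sub]
    simp only [chebL_monomial]
    have e := congrArg (Polynomial.eval t) (Polynomial.Chebyshev.T_add_one ℝ ((i : ℤ) - m))
    simp only [eval_sub, eval_mul, eval_X, eval_ofNat] at e
    have e1 : ((i + 2 : ℕ) : ℤ) - (m + 1) = (i : ℤ) - m + 1 := by push_cast; ring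
    have e2 : ((i + 1 : ℕ) : ℤ) - (m + 1) = (i : ℤ) - m := by push_cast; ring
    have e3 : (i : ℤ) - (m + 1) = (i : ℤ) - m - 1 := by ring
    rw [e1, e2, e3, e]
    ring

lemma chebL_prod {ι : Type} (t : ℝ) (z : ι → ℝ) (s : Finset ι) :
    chebL t (s.card : ℤ) (∏ j ∈ s,
      Polynomial.C (1 / 2 : ℝ) * (X ^ 2 - Polynomial.C (2 * z j) * X + 1))
      = ∏ j ∈ s, (t - z j) := by
  classical
  induction s using Finset.induction_on with
  | empty =>
    have := chebL_monomial t 0 0 1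
    simpa using this
  | insert a s ha ih =>
    rw [Finset.prod_insert ha, Finset.prod_insert ha, Finset.card_insert_of_notMem ha,
      Nat.cast_succ, chebL_step, ih]

theorem stmt12 (K : ℕ) (hK : 1 ≤ K) (z : Fin K → ℝ)
    (g : Polynomial ℝ)
    (hg : g = ∏ j : Fin K,
      Polynomial.C (1 / 2 : ℝ) * (X ^ 2 - Polynomial.C (2 * z j) * X + 1)) :
    ∀ t : ℝ,
      (∏ j : Fin K, (t - z j)) =
        ∑ i ∈ Finset.range (2 * K + 1),
          g.coeff i * (Polynomial.Chebyshev.T ℝ ((i : ℤ) - (K : ℤ))).eval t := by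
  intro t
  have h := chebL_prod t z Finset.univ
  rw [← hg, Finset.card_univ, Fintype.card_fin] at h
  have hd : g.natDegree < 2 * K + 1 := by
    rw [hg]
    refine Nat.lt_succ_of_le ((Polynomial.natDegree_prod_le _ _).trans ?_)
    refine (Finset.sum_le_card_nsmul _ _ 2 ?_).trans (by simp [mul_comm])
    intro j _
    compute_degree
  rw [← h]
  conv_lhs => rw [g.as_sum_range' _ hd]
  rw [map_sum]
  refine Finset.sum_congr rfl fun i _ => ?_
  rw [chebL_monomial, mul_comm]
end
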